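/- Let n = 2m be a positive even integer, H a complex Hilbert space with grading operator ε, F bounded with F² = 1 and Fε = −εF, A a ℂ-algebra, and ρ : A → B(H) a homomorphism into even operators with Fρ(a) − ρ(a)F (n+1)-Schatten for all a ∈ A. Define τⁿ(a₀,…,aₙ) = (2iπ)^m m! Tr_s(ρ(a₀)dρ(a₁)⋯dρ(aₙ)), τ^{n+2}(a₀,…,a_{n+2}) = (2iπ)^{m+1}(m+1)! Tr_s(ρ(a₀)dρ(a₁)⋯dρ(a_{n+2})), and (Sτⁿ)(a₀,…,a_{n+2}) = (2iπ)^{m+1} m! Σ_{j=0}^{n+1} Tr_s(ρ(a₀)dρ(a₁)⋯dρ(a_{j−1})·ρ(a_j)ρ(a_{j+1})·dρ(a_{j+2})⋯dρ(a_{n+2})). For 0 ≤ j ≤ n+1 let φ_j(a₀,…,a_{n+1}) = Trace(εF·ρ(a_j)dρ(a_{j+1})⋯dρ(a_{n+1})dρ(a₀)dρ(a₁)⋯dρ(a_{j−1})) and φ = Σ_{j=0}^{n+1} (−1)^j φ_j. Then φ ∈ C^{n+1}_λ(A) and Sτⁿ − τ^{n+2} = b(2^m i^{m+2} π^{m+1}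 m!·φ); in particular Sτⁿ and τ^{n+2} define the same class in H^{n+2}_λ(A). -/

import Mathlib

open scoped ENNReal

noncomputable section

variable {H : Type*} [NormedAddCommGroup H] [InnerProductSpace ℂ H] [CompleteSpace H]
variable {A : Type*} [NonUnitalRing A] [Module ℂ A] [SMulCommClass ℂ A A] [IsScalarTower ℂ A A]

/-- The `n`-th singular value of a (compact) operator `T` (approximation numbers). -/
def sval (T : H →L[ℂ] H) (n : ℕ) : ℝ :=
  sInf {c : ℝ | ∃ R : H →L[ℂ] H,
    Module.rank ℂ (LinearMap.range (R : H →ₗ[ℂ] H)) ≤ (n : Cardinal) ∧ c = ‖T - R‖}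

/-- The `p`-Schatten norm `‖T‖_p = (Σ_n s_n(T)^p)^(1/p)`, valued in `ℝ≥0∞`. -/
def schattenNorm (p : ℝ) (T : H →L[ℂ] H) : ℝ≥0∞ :=
  (∑' n : ℕ, ENNReal.ofReal (sval T n ^ p)) ^ (1 / p)

/-- `T` is a `p`-Schatten operator: compact with finite `p`-Schatten norm. -/
def MemSchatten (p : ℝ) (T : H →L[ℂ] H) : Prop :=
  IsCompactOperator (⇑T) ∧ schattenNorm p T < ⊤

/-- The trace of an operator, computed in a (choice of) Hilbert basis of `H`. -/
def opTrace (T : H →L[ℂ] H) : ℂ :=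
  ∑' i : (exists_hilbertBasis ℂ H).choose,
    @inner ℂ H _ ((exists_hilbertBasis ℂ H).choose_spec.choose i)
      (T ((exists_hilbertBasis ℂ H).choose_spec.choose i))

/-- The even part of `θ` with respect to the grading `ε`. -/
def evenPart (ε θ : H →L[ℂ] H) : H →L[ℂ] H := (2 : ℂ)⁻¹ • (θ + ε * θ * ε)

/-- The odd part of `θ` with respect to the grading `ε`. -/
def oddPart (ε θ : H →L[ℂ] H) : H →L[ℂ] H := (2 : ℂ)⁻¹ • (θ - ε * θ * ε)

/-- The graded commutator `[F, θ]`, extended additively from homogeneous operators. -/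
def gComm (ε F θ : H →L[ℂ] H) : H →L[ℂ] H :=
  (F * evenPart ε θ - evenPart ε θ * F) + (F * oddPart ε θ + oddPart ε θ * F)

/-- The graded trace `Tr_s(θ) := (1/2)·Trace(εF[F,θ])`. -/
def Trs (ε F θ : H →L[ℂ] H) : ℂ := (2 : ℂ)⁻¹ * opTrace (ε * F * gComm ε F θ)

/-- `dT = i(FT - TF)` for an even operator `T`. -/
def dOp (F T : H →L[ℂ] H) : H →L[ℂ] H := Complex.I • (F * T - T * F)

/-- The ordered product `f s * f (s+1) * ⋯ * f (s+k-1)` of operators. -/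
def opList (f : ℕ → H →L[ℂ] H) (s k : ℕ) : H →L[ℂ] H := ((List.range' s k).map f).prod

/-- The operator `ρ(a₀)·dρ(a₁)⋯dρ(a_k)`. -/
def charOp (ρf : A → H →L[ℂ] H) (F : H →L[ℂ] H) (k : ℕ) (a : Fin (k + 1) → A) :
    H →L[ℂ] H :=
  ρf (a 0) *
    opList (fun j => dOp F (ρf (a ⟨j % (k + 1), Nat.mod_lt _ (Nat.succ_pos k)⟩))) 1 k

/-- The `k`-dimensional character `τ(a₀,…,a_k) = (2iπ)^mm · mm! · Tr_s(ρ(a₀)dρ(a₁)⋯dρ(a_k))`. -/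
def tauChar (ρf : A → H →L[ℂ] H) (ε F : H →L[ℂ] H) (mm k : ℕ) (a : Fin (k + 1) → A) : ℂ :=
  (2 * Complex.I * (Real.pi : ℂ)) ^ mm * (Nat.factorial mm : ℂ) * Trs ε F (charOp ρf F k a)

/-- The Hochschild coboundary `b` on `(k+1)`-linear functionals. -/
def hochB {A : Type*} [Mul A] (k : ℕ) (ψ : (Fin (k + 1) → A) → ℂ) :
    (Fin (k + 2) → A) → ℂ := fun a =>
  (∑ i : Fin (k + 1), (-1 : ℂ) ^ (i : ℕ) *
    ψ (fun j => if (j : ℕ) < (i : ℕ) then a j.castSucc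
        else if (j : ℕ) = (i : ℕ) then a j.castSucc * a j.succ
        else a j.succ)) +
  (-1 : ℂ) ^ (k + 1) * ψ (fun j => if (j : ℕ) = 0 then a (Fin.last (k + 1)) * a 0
    else a j.castSucc)

/-- Cyclic indexing of a tuple by natural numbers. -/
def natIdx {A : Type*} {m : ℕ} (a : Fin (m + 1) → A) (k : ℕ) : A :=
  a ⟨k % (m + 1), Nat.mod_lt _ (Nat.succ_pos m)⟩

/-- The functional `Sτⁿ`: `(Sτⁿ)(a₀,…,a_{n+2}) = (2iπ)^{m+1} m! Σ_{j=0}^{n+1}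
Tr_s(ρ(a₀)dρ(a₁)⋯dρ(a_{j-1})·ρ(a_j)ρ(a_{j+1})·dρ(a_{j+2})⋯dρ(a_{n+2}))`. -/
def STau (ρf : A → H →L[ℂ] H) (ε F : H →L[ℂ] H) (mm n : ℕ) (a : Fin (n + 3) → A) : ℂ :=
  (2 * Complex.I * (Real.pi : ℂ)) ^ (mm + 1) * (Nat.factorial mm : ℂ) *
    ∑ j ∈ Finset.range (n + 2),
      Trs ε F
        (opList (fun k => if k = 0 then ρf (natIdx (m := n + 2) a k)
            else dOp F (ρf (natIdx (m := n + 2) a k))) 0 j *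
          ρf (natIdx (m := n + 2) a j) * ρf (natIdx (m := n + 2) a (j + 1)) *
          opList (fun k => dOp F (ρf (natIdx (m := n + 2) a k))) (j + 2) (n + 1 - j))

/-- The cochain `φ = Σ_{j=0}^{n+1} (-1)^j φ_j`, where
`φ_j(a₀,…,a_{n+1}) = Trace(εF·ρ(a_j)dρ(a_{j+1})⋯dρ(a_{n+1})dρ(a₀)⋯dρ(a_{j-1}))`. -/
def phiFn (ρf : A → H →L[ℂ] H) (ε F : H →L[ℂ] H) (n : ℕ) (a : Fin (n + 2) → A) : ℂ :=
  ∑ j ∈ Finset.range (n + 2), (-1 : ℂ) ^ j *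
    opTrace (ε * F * ρf (natIdx (m := n + 1) a j) *
      opList (fun k => dOp F (ρf (natIdx (m := n + 1) a k))) (j + 1) (n + 1))

/-!
Put `ψ(a₀, …, a_{n+1}) = Trace(εF ρ(a₀) dρ(a₁) ⋯ dρ(a_{n+1}))` and write `λ` for the signed cyclic
permutation, `N = 1 + λ + λ² + ⋯` for the cyclic norm and `δ_j` for the coface that multiplies the
arguments `a_j` and `a_{j+1}`. Since `φ = Nψ`, it is cyclic. The relations `λ δ_j = -δ_{j+1} λ` give
`b N = N b - N δ₀`. By the Leibniz rule and the cyclicity of the trace, `2bψ(a)` is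
`Trace(εF dρ(a₀) ⋯ dρ(a_{n+2}))`, which is cyclic and a multiple of `τ^{n+2}`; hence
`bφ = (n + 3) bψ - N δ₀ψ`. The `j`-th graded trace in `Sτⁿ` is `-i/2` times
`λ^j δ₀ψ - (-1)^j δ_jψ`, and summing over `j` gives `N δ₀ψ - bψ`, so that `Sτⁿ`, `τ^{n+2}` and `bφ`
are all combinations of `bψ` and `N δ₀ψ`.

The trace property `Trace(ST) = Trace(TS)` is needed for products that are trace class although
neither factor is. By Hölder `∑ s_n(S) s_n(T)` converges, and this suffices: approximate `S` by
operators of finite rank and control the error by a bound of `|Trace X|` by a constant times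
`∑ s_n(X)`, where `s_n` are the approximation numbers.
-/

section ApproximationNumbers

variable {E : Type*} [NormedAddCommGroup E] [InnerProductSpace ℂ E]
  {R S T : E →L[ℂ] E} {m n : ℕ}

/-- `R` has rank at most `n`; these are the competitors in the infimum defining `sval T n`. -/
def HasRankLE (R : E →L[ℂ] E) (n : ℕ) : Prop :=
  Module.rank ℂ (LinearMap.range (R : E →ₗ[ℂ] E)) ≤ (n : Cardinal)

namespace HasRankLE

lemma zero (n : ℕ) : HasRankLE (0 : E →L[ℂ] E) n :=
  (LinearMap.rank_zero (K := ℂ) (V := E) (V' := E)).le.trans zero_le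

lemma eq_zero (hR : HasRankLE R 0) : R = 0 := by
  have hrange : LinearMap.range (R : E →ₗ[ℂ] E) = ⊥ :=
    Submodule.rank_eq_zero.mp (by simpa [HasRankLE] using hR)
  exact ContinuousLinearMap.coe_injective (LinearMap.range_eq_bot.mp hrange)

lemma mono (hR : HasRankLE R m) (h : m ≤ n) : HasRankLE R n :=
  le_trans hR (by exact_mod_cast h)

lemma add (hR : HasRankLE R m) (hS : HasRankLE S n) : HasRankLE (R + S) (m + n) := by
  refine (LinearMap.rank_add_le (R : E →ₗ[ℂ] E) (S : E →ₗ[ℂ] E)).trans ?_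
  push_cast
  exact add_le_add hR hS

lemma mul_left (hR : HasRankLE R n) (S : E →L[ℂ] E) : HasRankLE (S * R) n :=
  (LinearMap.rank_comp_le_right (R : E →ₗ[ℂ] E) (S : E →ₗ[ℂ] E)).trans hR

lemma mul_right (hR : HasRankLE R n) (S : E →L[ℂ] E) : HasRankLE (R * S) n :=
  (LinearMap.rank_comp_le_left (S : E →ₗ[ℂ] E) (R : E →ₗ[ℂ] E)).trans hR

lemma neg (hR : HasRankLE R n) : HasRankLE (-R) n := by
  simpa using hR.mul_left (-1)

lemma sub (hR : HasRankLE R m) (hS : HasRankLE S n) : HasRankLE (R - S) (m + n) := by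
  simpa only [sub_eq_add_neg] using hR.add hS.neg

end HasRankLE

lemma sval_nonneg (T : E →L[ℂ] E) (n : ℕ) : 0 ≤ sval T n := by
  refine Real.sInf_nonneg ?_
  rintro c ⟨R, -, rfl⟩
  exact norm_nonneg _

lemma sval_le_norm_sub (T : E →L[ℂ] E) (hR : HasRankLE R n) : sval T n ≤ ‖T - R‖ := by
  refine csInf_le ⟨0, ?_⟩ ⟨R, hR, rfl⟩
  rintro c ⟨R, -, rfl⟩
  exact norm_nonneg _

lemma sval_le_norm (T : E →L[ℂ] E) (n : ℕ) : sval T n ≤ ‖T‖ := by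
  simpa using sval_le_norm_sub T (HasRankLE.zero n)

lemma exists_norm_sub_lt_sval_add (T : E →L[ℂ] E) (n : ℕ) {δ : ℝ} (hδ : 0 < δ) :
    ∃ R : E →L[ℂ] E, HasRankLE R n ∧ ‖T - R‖ < sval T n + δ := by
  obtain ⟨_, ⟨R, hR, rfl⟩, hlt⟩ := Real.lt_sInf_add_pos
    (s := {c : ℝ | ∃ R : E →L[ℂ] E, HasRankLE R n ∧ c = ‖T - R‖}) ⟨_, 0, HasRankLE.zero n, rfl⟩ hδ
  exact ⟨R, hR, hlt⟩

lemma sval_antitone (T : E →L[ℂ] E) : Antitone (sval T) := by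
  intro m n hmn
  refine le_of_forall_pos_le_add fun δ hδ => ?_
  obtain ⟨R, hR, hlt⟩ := exists_norm_sub_lt_sval_add T m hδ
  exact (sval_le_norm_sub T (hR.mono hmn)).trans hlt.le

lemma HasRankLE.sval_eq_zero (hR : HasRankLE R m) (h : m ≤ n) : sval R n = 0 :=
  le_antisymm (by simpa using sval_le_norm_sub R (hR.mono h)) (sval_nonneg R n)

lemma sval_add_le (S T : E →L[ℂ] E) (m n : ℕ) : sval (S + T) (m + n) ≤ sval S m + sval T n := by
  refine le_of_forall_pos_le_add fun δ hδ => ?_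
  obtain ⟨R, hR, hRS⟩ := exists_norm_sub_lt_sval_add S m (half_pos hδ)
  obtain ⟨Q, hQ, hQT⟩ := exists_norm_sub_lt_sval_add T n (half_pos hδ)
  calc sval (S + T) (m + n) ≤ ‖S + T - (R + Q)‖ := sval_le_norm_sub _ (hR.add hQ)
    _ = ‖(S - R) + (T - Q)‖ := by rw [add_sub_add_comm]
    _ ≤ ‖S - R‖ + ‖T - Q‖ := norm_add_le _ _
    _ ≤ sval S m + sval T n + δ := by linarith

lemma HasRankLE.sval_sub_le (hR : HasRankLE R n) (T : E →L[ℂ] E) (m : ℕ) :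
    sval (T - R) (m + n) ≤ sval T m := by
  simpa [sub_eq_add_neg, hR.neg.sval_eq_zero le_rfl] using sval_add_le T (-R) m n

lemma sval_mul_le (S T : E →L[ℂ] E) (m n : ℕ) : sval (S * T) (m + n) ≤ sval S m * sval T n := by
  have happrox : ∀ δ : ℝ, 0 < δ → sval (S * T) (m + n) ≤ (sval S m + δ) * (sval T n + δ) := by
    intro δ hδ
    obtain ⟨R, hR, hRS⟩ := exists_norm_sub_lt_sval_add S m hδ
    obtain ⟨Q, hQ, hQT⟩ := exists_norm_sub_lt_sval_add T n hδ
    calc sval (S * T) (m + n) ≤ ‖S * T - (R * T + (S - R) * Q)‖ :=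
          sval_le_norm_sub _ ((hR.mul_right T).add (hQ.mul_left (S - R)))
      _ = ‖(S - R) * (T - Q)‖ := by congr 1; noncomm_ring
      _ ≤ ‖S - R‖ * ‖T - Q‖ := norm_mul_le _ _
      _ ≤ (sval S m + δ) * (sval T n + δ) :=
          mul_le_mul hRS.le hQT.le (norm_nonneg _) (by linarith [sval_nonneg S m])
  have hlim : Filter.Tendsto (fun δ : ℝ => (sval S m + δ) * (sval T n + δ))
      (nhdsWithin 0 (Set.Ioi 0)) (nhds (sval S m * sval T n)) := by
    have hcont : Continuous fun δ : ℝ => (sval S m + δ) * (sval T n + δ) := by fun_prop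
    simpa using (hcont.tendsto 0).mono_left nhdsWithin_le_nhds
  exact ge_of_tendsto hlim (by filter_upwards [self_mem_nhdsWithin] with δ hδ using happrox δ hδ)

lemma sum_two_pow_mul_sval_le_tsum (hT : Summable (sval T)) (K : ℕ) :
    ∑ k ∈ Finset.range (K + 1), 2 ^ k * sval T (2 ^ k - 1) ≤ 2 * ∑' n, sval T n := by
  have hcond := Finset.sum_condensed_le (f := fun n => sval T (n - 1))
    (fun m n _ hmn => sval_antitone T (Nat.sub_le_sub_right hmn 1)) K
  have hsum : sval T 0 + ∑ k ∈ Finset.Ico 2 (2 ^ K + 1), sval T (k - 1) ≤ ∑' n, sval T n := by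
    have hIco : ∑ k ∈ Finset.Ico 2 (2 ^ K + 1), sval T (k - 1) =
        ∑ k ∈ Finset.Ico 1 (2 ^ K), sval T k := by
      simpa using (Finset.sum_Ico_add' (fun k => sval T (k - 1)) 1 (2 ^ K) 1).symm
    rw [hIco, ← Finset.sum_range_eq_add_Ico _ (by positivity)]
    exact hT.sum_le_tsum _ fun j _ => sval_nonneg T j
  simp only [nsmul_eq_mul, Nat.cast_pow, Nat.cast_ofNat, Nat.sub_self] at hcond
  linarith [sval_nonneg T 0]

end ApproximationNumbers

section Diagonal

variable {E : Type*} [NormedAddCommGroup E] [InnerProductSpace ℂ E]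
  {R T : E →L[ℂ] E} {n : ℕ} {ι : Type*} (b : HilbertBasis ι ℂ E) (s : Finset ι)

/-- The sum of the moduli of the diagonal entries of `T` indexed by `s`, in the basis `b`; its
boundedness in `s` is the absolute convergence of the trace. -/
def diagAbsSum (T : E →L[ℂ] E) : ℝ := ∑ i ∈ s, ‖inner ℂ (b i) (T (b i))‖

lemma diagAbsSum_add_le (S T : E →L[ℂ] E) :
    diagAbsSum b s (S + T) ≤ diagAbsSum b s S + diagAbsSum b s T := by
  rw [diagAbsSum, diagAbsSum, diagAbsSum, ← Finset.sum_add_distrib]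
  refine Finset.sum_le_sum fun i _ => ?_
  rw [add_apply, inner_add_right]
  exact norm_add_le _ _

lemma diagAbsSum_le_card_mul_norm (T : E →L[ℂ] E) : diagAbsSum b s T ≤ s.card * ‖T‖ := by
  rw [diagAbsSum, ← nsmul_eq_mul]
  refine Finset.sum_le_card_nsmul s _ _ fun i _ => (norm_inner_le_norm _ _).trans ?_
  simpa [b.orthonormal.1 i] using T.le_opNorm (b i)

lemma sum_norm_inner_mul_norm_inner_le (f g : E) :
    ∑ i ∈ s, ‖inner ℂ g (b i)‖ * ‖inner ℂ (b i) f‖ ≤ ‖g‖ * ‖f‖ := by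
  simp only [norm_inner_symm g]
  refine (Real.sum_mul_le_sqrt_mul_sqrt s _ _).trans ?_
  gcongr <;> exact Real.sqrt_le_iff.mpr ⟨norm_nonneg _, b.orthonormal.sum_inner_products_le _⟩

variable [CompleteSpace E]

lemma HasRankLE.exists_eq_sum_inner_smul (hR : HasRankLE R n) :
    ∃ (r : ℕ) (f g : Fin r → E), r ≤ n ∧ (∀ j, ‖f j‖ ≤ 1) ∧ (∀ j, ‖g j‖ ≤ ‖R‖) ∧
      ∀ v, R v = ∑ j, inner ℂ (g j) v • f j := by
  have : Module.Finite ℂ (LinearMap.range (R : E →ₗ[ℂ] E)) :=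
    Module.rank_lt_aleph0_iff.mp (lt_of_le_of_lt hR Cardinal.natCast_lt_aleph0)
  let b := stdOrthonormalBasis ℂ (LinearMap.range (R : E →ₗ[ℂ] E))
  have hb : ∀ j, ‖(b j : E)‖ = 1 := fun j => b.orthonormal.1 j
  refine ⟨_, fun j => (b j : E), fun j => ContinuousLinearMap.adjoint R (b j : E),
    Module.finrank_le_of_rank_le hR, fun j => (hb j).le, fun j => ?_, fun v => ?_⟩
  · refine (ContinuousLinearMap.le_opNorm _ _).trans ?_
    rw [hb j, mul_one, LinearIsometryEquiv.norm_map]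
  · have h := congrArg Subtype.val (b.sum_repr' ⟨R v, ⟨v, rfl⟩⟩)
    simp only [AddSubmonoidClass.coe_finsetSum, Submodule.coe_smul] at h
    simp only [ContinuousLinearMap.adjoint_inner_left]
    exact h.symm

lemma HasRankLE.diagAbsSum_le (hR : HasRankLE R n) : diagAbsSum b s R ≤ n * ‖R‖ := by
  obtain ⟨r, f, g, hr, hf, hg, hRv⟩ := hR.exists_eq_sum_inner_smul
  calc diagAbsSum b s R
      ≤ ∑ i ∈ s, ∑ j, ‖inner ℂ (g j) (b i)‖ * ‖inner ℂ (b i) (f j)‖ := by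
        refine Finset.sum_le_sum fun i _ => ?_
        simpa only [hRv, inner_sum, inner_smul_right, norm_mul] using
          norm_sum_le Finset.univ fun j => inner ℂ (b i) (inner ℂ (g j) (b i) • f j)
    _ = ∑ j, ∑ i ∈ s, ‖inner ℂ (g j) (b i)‖ * ‖inner ℂ (b i) (f j)‖ := Finset.sum_comm
    _ ≤ ∑ _j : Fin r, ‖R‖ := by
        refine Finset.sum_le_sum fun j _ =>
          (sum_norm_inner_mul_norm_inner_le b s (f j) (g j)).trans ?_
        simpa using mul_le_mul (hg j) (hf j) (norm_nonneg _) (norm_nonneg _)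
    _ = r * ‖R‖ := by simp
    _ ≤ n * ‖R‖ := by gcongr

-- Chaining: `T = (T - R K) + ∑ k < K, (R (k + 1) - R k)`, and the `k`-th increment has rank at
-- most `3 * 2 ^ k`.
lemma diagAbsSum_le_of_dyadic {R : ℕ → E →L[ℂ] E} (hR0 : R 0 = 0)
    (hR : ∀ k, HasRankLE (R k) (2 ^ k)) {K : ℕ} (hs : s.card ≤ 2 ^ K) (T : E →L[ℂ] E) :
    diagAbsSum b s T ≤ 6 * ∑ k ∈ Finset.range (K + 1), 2 ^ k * ‖T - R k‖ := by
  have hstep : ∀ k, diagAbsSum b s (R (k + 1) - R k) ≤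
      3 * (2 ^ k * ‖T - R k‖) + 3 / 2 * (2 ^ (k + 1) * ‖T - R (k + 1)‖) := by
    intro k
    have hnorm : ‖R (k + 1) - R k‖ ≤ ‖T - R k‖ + ‖T - R (k + 1)‖ := by
      simpa using norm_sub_le (T - R k) (T - R (k + 1))
    calc diagAbsSum b s (R (k + 1) - R k)
        ≤ ((2 ^ (k + 1) + 2 ^ k : ℕ) : ℝ) * ‖R (k + 1) - R k‖ :=
          ((hR (k + 1)).sub (hR k)).diagAbsSum_le b s
      _ ≤ ((2 ^ (k + 1) + 2 ^ k : ℕ) : ℝ) * (‖T - R k‖ + ‖T - R (k + 1)‖) := by gcongr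
      _ = 3 * (2 ^ k * ‖T - R k‖) + 3 / 2 * (2 ^ (k + 1) * ‖T - R (k + 1)‖) := by
          push_cast; ring
  have hR_le : ∀ L, diagAbsSum b s (R L) + 9 / 2 * (2 ^ L * ‖T - R L‖) ≤
      6 * ∑ k ∈ Finset.range (L + 1), 2 ^ k * ‖T - R k‖ := by
    intro L
    induction L with
    | zero => simp [hR0, diagAbsSum]; linarith [norm_nonneg T]
    | succ L ih =>
      have hadd := diagAbsSum_add_le b s (R L) (R (L + 1) - R L)
      rw [add_sub_cancel] at hadd
      have hpos : 0 ≤ (2 : ℝ) ^ L * ‖T - R L‖ := by positivity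
      rw [Finset.sum_range_succ]
      linarith [hstep L]
  have htail : diagAbsSum b s (T - R K) ≤ 2 ^ K * ‖T - R K‖ :=
    (diagAbsSum_le_card_mul_norm b s _).trans (by gcongr; exact_mod_cast hs)
  have hadd := diagAbsSum_add_le b s (R K) (T - R K)
  rw [add_sub_cancel] at hadd
  have hpos : 0 ≤ (2 : ℝ) ^ K * ‖T - R K‖ := by positivity
  linarith [hR_le K]

lemma diagAbsSum_le_tsum_sval (hT : Summable (sval T)) :
    diagAbsSum b s T ≤ 12 * ∑' n, sval T n := by
  refine le_of_forall_pos_le_add fun δ hδ => ?_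
  have happrox : ∀ k : ℕ, ∃ R : E →L[ℂ] E, HasRankLE R (2 ^ k - 1) ∧
      ‖T - R‖ < sval T (2 ^ k - 1) + δ / 12 * (1 / 4) ^ k := fun k =>
    exists_norm_sub_lt_sval_add T _ (by positivity)
  choose R hR hRT using happrox
  have hR0 : R 0 = 0 := HasRankLE.eq_zero (hR 0)
  have hgeom : ∑ k ∈ Finset.range (s.card + 1), (2 : ℝ) ^ k * (1 / 4) ^ k ≤ 2 := by
    simp only [← mul_pow]
    norm_num only
    refine le_of_le_of_eq ?_ tsum_geometric_two
    exact summable_geometric_two.sum_le_tsum _ fun _ _ => by positivity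
  calc diagAbsSum b s T
      ≤ 6 * ∑ k ∈ Finset.range (s.card + 1), 2 ^ k * ‖T - R k‖ :=
        diagAbsSum_le_of_dyadic b s hR0 (fun k => (hR k).mono (Nat.sub_le _ _))
          Nat.lt_two_pow_self.le T
    _ ≤ 6 * ∑ k ∈ Finset.range (s.card + 1),
          2 ^ k * (sval T (2 ^ k - 1) + δ / 12 * (1 / 4) ^ k) := by
        gcongr with k; exact (hRT k).le
    _ = 6 * ∑ k ∈ Finset.range (s.card + 1), 2 ^ k * sval T (2 ^ k - 1) +
          δ / 2 * ∑ k ∈ Finset.range (s.card + 1), 2 ^ k * (1 / 4) ^ k := by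
        simp only [mul_add, Finset.sum_add_distrib, Finset.mul_sum]
        congr 1
        exact Finset.sum_congr rfl fun k _ => by ring
    _ ≤ 6 * (2 * ∑' n, sval T n) + δ / 2 * 2 := by
        gcongr; exact sum_two_pow_mul_sval_le_tsum hT _
    _ = 12 * ∑' n, sval T n + δ := by ring

end Diagonal

section Trace

open Filter Topology

lemma summable_comp_div {g : ℕ → ℝ} (hg : Summable g) (hg0 : 0 ≤ g) {c : ℕ} (hc : c ≠ 0) :
    Summable fun n => g (n / c) := by
  have : NeZero c := ⟨hc⟩
  have hprod := hg.mul_of_nonneg (g := fun _ : Fin c => (1 : ℝ)) Summable.of_finite hg0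
    fun _ => zero_le_one
  exact ((Nat.divModEquiv c).summable_iff.mpr hprod).congr fun n => by simp [Nat.divModEquiv]

variable {E : Type*} [NormedAddCommGroup E] [InnerProductSpace ℂ E]

lemma sval_mul_le_of_add_le (S T : E →L[ℂ] E) {k l n : ℕ} (h : k + l ≤ n) :
    sval (S * T) n ≤ sval S k * sval T l :=
  (sval_antitone _ h).trans (sval_mul_le S T k l)

lemma HasRankLE.summable_sval {R : E →L[ℂ] E} {n : ℕ} (hR : HasRankLE R n) :
    Summable (sval R) :=
  summable_of_ne_finset_zero (s := Finset.range n) fun _ hk =>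
    hR.sval_eq_zero (by simpa using hk)

lemma exists_hasRankLE_tendsto_norm_sub {T : E →L[ℂ] E} (hT : Tendsto (sval T) atTop (𝓝 0)) :
    ∃ R : ℕ → E →L[ℂ] E, (∀ k, HasRankLE (R k) k) ∧
      Tendsto (fun k => ‖T - R k‖) atTop (𝓝 0) ∧
      ∀ k n, sval (T - R k) (2 * n) ≤ sval T n + (1 / 2) ^ n := by
  choose R hR hRT using fun k : ℕ =>
    exists_norm_sub_lt_sval_add T k (δ := (1 / 2) ^ k) (by positivity)
  refine ⟨R, hR, ?_, fun k n => ?_⟩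
  · have hlim : Tendsto (fun k : ℕ => sval T k + (1 / 2) ^ k) atTop (𝓝 0) := by
      simpa using hT.add (tendsto_pow_atTop_nhds_zero_of_lt_one
        (r := (1 / 2 : ℝ)) (by norm_num) (by norm_num))
    exact squeeze_zero (fun _ => norm_nonneg _) (fun k => (hRT k).le) hlim
  · rcases le_total n k with hnk | hkn
    · refine (sval_le_norm _ _).trans ((hRT k).le.trans (add_le_add (sval_antitone T hnk) ?_))
      exact pow_le_pow_of_le_one (by norm_num) (by norm_num) hnk
    · calc sval (T - R k) (2 * n) ≤ sval (T - R k) (n + k) := sval_antitone _ (by omega)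
        _ ≤ sval T n := (hR k).sval_sub_le T n
        _ ≤ sval T n + (1 / 2) ^ n := le_add_of_nonneg_right (by positivity)

lemma exists_hasRankLE_dominated {S T : E →L[ℂ] E} (hS : Tendsto (sval S) atTop (𝓝 0))
    (hST : Summable fun n => sval S n * sval T n) :
    ∃ (R : ℕ → E →L[ℂ] E) (g : ℕ → ℝ), (∀ k, HasRankLE (R k) k) ∧
      Tendsto (fun k => ‖S - R k‖) atTop (𝓝 0) ∧ Summable g ∧
      (∀ k n, sval ((S - R k) * T) n ≤ g n) ∧ ∀ k n, sval (T * (S - R k)) n ≤ g n := by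
  obtain ⟨R, hR, hlim, hRS⟩ := exists_hasRankLE_tendsto_norm_sub hS
  have hsum : Summable fun n => (sval S n + (1 / 2) ^ n) * sval T n := by
    have hgeom : Summable fun n : ℕ => (1 / 2 : ℝ) ^ n * sval T n :=
      (summable_geometric_two.mul_right ‖T‖).of_nonneg_of_le
        (fun n => mul_nonneg (by positivity) (sval_nonneg _ _))
        fun n => by gcongr; exact sval_le_norm T n
    simpa only [add_mul] using hST.add hgeom
  refine ⟨R, fun n => (sval S (n / 3) + (1 / 2) ^ (n / 3)) * sval T (n / 3), hR, hlim,
    summable_comp_div hsum (fun n => mul_nonneg (add_nonneg (sval_nonneg _ _) (by positivity))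
      (sval_nonneg _ _)) three_ne_zero, fun k n => ?_, fun k n => ?_⟩
  · exact (sval_mul_le_of_add_le _ _ (k := 2 * (n / 3)) (l := n / 3) (by omega)).trans
      (mul_le_mul_of_nonneg_right (hRS k _) (sval_nonneg _ _))
  · refine (sval_mul_le_of_add_le _ _ (k := n / 3) (l := 2 * (n / 3)) (by omega)).trans ?_
    rw [mul_comm]
    exact mul_le_mul_of_nonneg_right (hRS k _) (sval_nonneg _ _)

variable [CompleteSpace E] {S T : E →L[ℂ] E}

lemma summable_norm_inner_of_summable_sval {ι : Type*} (b : HilbertBasis ι ℂ E)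
    (hT : Summable (sval T)) : Summable fun i => ‖inner ℂ (b i) (T (b i))‖ :=
  summable_of_sum_le (fun _ => norm_nonneg _) fun s => diagAbsSum_le_tsum_sval b s hT

lemma norm_opTrace_le (hT : Summable (sval T)) : ‖opTrace T‖ ≤ 12 * ∑' n, sval T n := by
  have hsum := summable_norm_inner_of_summable_sval
    (exists_hilbertBasis ℂ E).choose_spec.choose hT
  exact (norm_tsum_le_tsum_norm hsum).trans
    (hsum.tsum_le_of_sum_le fun s => diagAbsSum_le_tsum_sval _ s hT)

lemma opTrace_add (hS : Summable (sval S)) (hT : Summable (sval T)) :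
    opTrace (S + T) = opTrace S + opTrace T := by
  simp only [opTrace, add_apply, inner_add_right]
  exact (summable_norm_inner_of_summable_sval _ hS).of_norm.tsum_add
    (summable_norm_inner_of_summable_sval _ hT).of_norm

lemma opTrace_smul (c : ℂ) (T : E →L[ℂ] E) : opTrace (c • T) = c * opTrace T := by
  simp only [opTrace, smul_apply, inner_smul_right, tsum_mul_left]

lemma opTrace_eq_sum_inner {r : ℕ} {f g : Fin r → E}
    (hT : ∀ v, T v = ∑ j, inner ℂ (g j) v • f j) : opTrace T = ∑ j, inner ℂ (g j) (f j) := by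
  refine HasSum.tsum_eq ?_
  simp only [hT, inner_sum, inner_smul_right]
  exact hasSum_sum fun j _ => HilbertBasis.hasSum_inner_mul_inner _ _ _

lemma HasRankLE.opTrace_mul_comm {R : E →L[ℂ] E} {n : ℕ} (hR : HasRankLE R n)
    (T : E →L[ℂ] E) : opTrace (R * T) = opTrace (T * R) := by
  obtain ⟨r, f, g, -, -, -, hRv⟩ := hR.exists_eq_sum_inner_smul
  rw [opTrace_eq_sum_inner (T := R * T) (f := f) (g := fun j => T.adjoint (g j)),
    opTrace_eq_sum_inner (T := T * R) (f := fun j => T (f j)) (g := g)]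
  · simp only [ContinuousLinearMap.adjoint_inner_left]
  · intro v
    simp [hRv]
  · intro v
    simp [hRv, ContinuousLinearMap.adjoint_inner_left]

lemma tendsto_opTrace_zero_of_dominated {X : ℕ → E →L[ℂ] E} {g : ℕ → ℝ} (hg : Summable g)
    (hXg : ∀ k n, sval (X k) n ≤ g n) (hX : Tendsto (fun k => ‖X k‖) atTop (𝓝 0)) :
    Tendsto (fun k => opTrace (X k)) atTop (𝓝 0) := by
  have hsum : Tendsto (fun k => 12 * ∑' n, sval (X k) n) atTop (𝓝 0) := by
    have hdom := tendsto_tsum_of_dominated_convergence (f := fun k => sval (X k)) hg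
      (fun n => squeeze_zero (fun _ => sval_nonneg _ _) (fun _ => sval_le_norm _ n) hX)
      (Eventually.of_forall fun k n => by
        simpa [Real.norm_of_nonneg (sval_nonneg _ _)] using hXg k n)
    simpa using hdom.const_mul 12
  refine squeeze_zero_norm (fun k => norm_opTrace_le ?_) hsum
  exact hg.of_nonneg_of_le (sval_nonneg _) (hXg k)

-- With `R k → S` of finite rank, `tr (S * T) - tr (T * S)` is the difference of the traces of
-- `(S - R k) * T` and `T * (S - R k)`, which tend to zero.
lemma opTrace_mul_comm_of_tendsto_sval_zero (hS : Tendsto (sval S) atTop (𝓝 0))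
    (hST : Summable fun n => sval S n * sval T n) : opTrace (S * T) = opTrace (T * S) := by
  obtain ⟨R, g, hR, hlim, hg, hleft, hright⟩ := exists_hasRankLE_dominated hS hST
  have hnorm : Tendsto (fun k => ‖S - R k‖ * ‖T‖) atTop (𝓝 0) := by
    simpa using hlim.mul_const ‖T‖
  have hleft_lim := tendsto_opTrace_zero_of_dominated hg hleft
    (squeeze_zero (fun _ => norm_nonneg _) (fun _ => norm_mul_le _ _) hnorm)
  have hright_lim := tendsto_opTrace_zero_of_dominated hg hright
    (squeeze_zero (fun _ => norm_nonneg _)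
      (fun _ => (norm_mul_le _ _).trans_eq (mul_comm _ _)) hnorm)
  have hdiff : ∀ k, opTrace ((S - R k) * T) - opTrace (T * (S - R k)) =
      opTrace (S * T) - opTrace (T * S) := by
    intro k
    have hsplit := opTrace_add (hg.of_nonneg_of_le (sval_nonneg _) (hleft k))
      ((hR k).mul_right T).summable_sval
    have hsplit' := opTrace_add (hg.of_nonneg_of_le (sval_nonneg _) (hright k))
      ((hR k).mul_left T).summable_sval
    rw [← add_mul, sub_add_cancel] at hsplit
    rw [← mul_add, sub_add_cancel] at hsplit'
    rw [hsplit, hsplit', (hR k).opTrace_mul_comm T, add_sub_add_right_eq_sub]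
  have hconst := hleft_lim.sub hright_lim
  simp only [hdiff, sub_zero] at hconst
  exact sub_eq_zero.mp (tendsto_nhds_unique tendsto_const_nhds hconst)

theorem opTrace_mul_comm (hST : Summable fun n => sval S n * sval T n) :
    opTrace (S * T) = opTrace (T * S) := by
  have hlim : ∀ U : E →L[ℂ] E, Tendsto (sval U) atTop (𝓝 (⨅ n, sval U n)) := fun U =>
    tendsto_atTop_ciInf (sval_antitone U) ⟨0, by rintro _ ⟨n, rfl⟩; exact sval_nonneg U n⟩
  have hprod : (⨅ n, sval S n) * (⨅ n, sval T n) = 0 :=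
    tendsto_nhds_unique ((hlim S).mul (hlim T)) hST.tendsto_atTop_zero
  rcases mul_eq_zero.mp hprod with hS | hT
  · exact opTrace_mul_comm_of_tendsto_sval_zero (hS ▸ hlim S) hST
  · exact (opTrace_mul_comm_of_tendsto_sval_zero (hT ▸ hlim T)
      (by simpa only [mul_comm] using hST)).symm

end Trace

section SchattenIdeals

variable {p q r : ℝ≥0∞}

lemma memℓp_comp_div {f : ℕ → ℝ} (hf : Memℓp f q) {c : ℕ} (hc : c ≠ 0) :
    Memℓp (fun n => f (n / c)) q := by
  obtain (rfl | rfl | hq) := q.trichotomy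
  · have hzero : ∀ᶠ n in Filter.atTop, f n = 0 :=
      Nat.cofinite_eq_atTop ▸ Filter.eventually_cofinite.mpr hf.finite_dsupport
    have hdiv := (Nat.tendsto_div_const_atTop hc).eventually hzero
    rw [← Nat.cofinite_eq_atTop] at hdiv
    exact memℓp_zero (Filter.eventually_cofinite.mp hdiv)
  · exact memℓp_infty (hf.bddAbove.mono (by rintro _ ⟨n, rfl⟩; exact ⟨n / c, rfl⟩))
  · exact memℓp_gen (summable_comp_div (hf.summable hq) (fun _ => by positivity) hc)

variable {E : Type*} [NormedAddCommGroup E] [InnerProductSpace ℂ E]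

/-- `T` belongs to the Schatten ideal of exponent `q ∈ [0, ∞]`, that is, its approximation numbers
form an `ℓ^q` sequence. For `q = 1` this is the trace class; for `q = ∞` every bounded operator
qualifies, compact or not. -/
def IsSchatten (q : ℝ≥0∞) (T : E →L[ℂ] E) : Prop := Memℓp (sval T) q

lemma isSchatten_top (T : E →L[ℂ] E) : IsSchatten ∞ T :=
  memℓp_infty ⟨‖T‖, by
    rintro _ ⟨n, rfl⟩
    simpa [Real.norm_of_nonneg (sval_nonneg T n)] using sval_le_norm T n⟩

namespace IsSchatten

variable {S T : E →L[ℂ] E}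

lemma summable_sval (hT : IsSchatten 1 T) : Summable (sval T) := Memℓp.summable_of_one hT

lemma mono (hT : IsSchatten p T) (hpq : p ≤ q) : IsSchatten q T := Memℓp.of_exponent_ge hT hpq

lemma memℓp_sval_mul_sval [p.HolderTriple q r] (hS : IsSchatten p S) (hT : IsSchatten q T) :
    Memℓp (fun n => sval S n * sval T n) r :=
  Memℓp.holder r hS hT (fun _ => ContinuousLinearMap.mul ℝ ℝ)
    fun _ => ContinuousLinearMap.opNorm_mul_le ℝ ℝ

protected lemma mul [p.HolderTriple q r] (hS : IsSchatten p S) (hT : IsSchatten q T) :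
    IsSchatten r (S * T) := by
  refine (memℓp_comp_div (hS.memℓp_sval_mul_sval hT) two_ne_zero).mono fun n => ?_
  rw [Real.norm_of_nonneg (sval_nonneg _ _)]
  exact sval_mul_le_of_add_le S T (by omega)

lemma mul_left (hT : IsSchatten p T) (S : E →L[ℂ] E) : IsSchatten p (S * T) :=
  (isSchatten_top S).mul hT

lemma mul_right (hT : IsSchatten p T) (S : E →L[ℂ] E) : IsSchatten p (T * S) :=
  hT.mul (isSchatten_top S)

lemma smul (hT : IsSchatten p T) (c : ℂ) : IsSchatten p (c • T) := by
  simpa using hT.mul_left (c • 1)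

end IsSchatten

lemma MemSchatten.isSchatten {s : ℝ} (hs : 0 < s) {T : E →L[ℂ] E} (hT : MemSchatten s T) :
    IsSchatten (ENNReal.ofReal s) T := by
  have hsum : ∑' k, ENNReal.ofReal (sval T k ^ s) ≠ ∞ := fun htop => by
    simpa [schattenNorm, htop, hs] using hT.2
  refine memℓp_gen ((ENNReal.summable_toReal hsum).congr fun k => ?_)
  rw [ENNReal.toReal_ofReal hs.le, Real.norm_of_nonneg (sval_nonneg T k),
    ENNReal.toReal_ofReal (Real.rpow_nonneg (sval_nonneg T k) s)]

lemma holderTriple_natCast_div (d : ℕ) [NeZero d] (k l : ℕ) :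
    ENNReal.HolderTriple (d / k) (d / l) (d / (k + l : ℕ)) := by
  refine ⟨?_⟩
  have hd : (d : ℝ≥0∞) ≠ 0 := NeZero.ne _
  rw [ENNReal.inv_div (.inl (ENNReal.natCast_ne_top _)) (.inr hd),
    ENNReal.inv_div (.inl (ENNReal.natCast_ne_top _)) (.inr hd),
    ENNReal.inv_div (.inl (ENNReal.natCast_ne_top _)) (.inr hd), ENNReal.div_add_div_same,
    Nat.cast_add]

lemma natCast_div_natCast_le_one {d k : ℕ} (h : d ≤ k) : (d / k : ℝ≥0∞) ≤ 1 :=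
  ENNReal.div_le_of_le_mul (by simpa using h)

variable {S T : E →L[ℂ] E} {d k l : ℕ} [NeZero d]

lemma IsSchatten.mul_natCast_div (hS : IsSchatten (d / k) S) (hT : IsSchatten (d / l) T) :
    IsSchatten (d / (k + l : ℕ)) (S * T) :=
  have := holderTriple_natCast_div d k l
  hS.mul hT

variable [CompleteSpace E]

theorem opTrace_mul_comm_of_isSchatten (hS : IsSchatten (d / k) S) (hT : IsSchatten (d / l) T)
    (hd : d ≤ k + l) : opTrace (S * T) = opTrace (T * S) :=
  have := holderTriple_natCast_div d k l
  opTrace_mul_comm (Memℓp.summable_of_one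
    ((hS.memℓp_sval_mul_sval hT).of_exponent_ge (natCast_div_natCast_le_one hd)))

lemma IsSchatten.opTrace_mul_comm (hT : IsSchatten 1 T) (S : E →L[ℂ] E) :
    opTrace (S * T) = opTrace (T * S) :=
  opTrace_mul_comm_of_isSchatten (d := 1) (k := 0) (l := 1) (by simpa using isSchatten_top S)
    (by simpa using hT) le_rfl

end SchattenIdeals

section OperatorIdentities

variable {E : Type*} [NormedAddCommGroup E] [InnerProductSpace ℂ E] {ε F : E →L[ℂ] E}

lemma opList_zero (f : ℕ → E →L[ℂ] E) (s : ℕ) : opList f s 0 = 1 := rfl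

lemma opList_succ (f : ℕ → E →L[ℂ] E) (s k : ℕ) :
    opList f s (k + 1) = f s * opList f (s + 1) k := by
  simp [opList, List.range'_succ]

lemma opList_add (f : ℕ → E →L[ℂ] E) (s k l : ℕ) :
    opList f s (k + l) = opList f s k * opList f (s + k) l := by
  induction k generalizing s with
  | zero => simp [opList_zero]
  | succ k ih =>
    rw [Nat.succ_add, opList_succ, opList_succ, ih, mul_assoc, Nat.add_right_comm, add_assoc]

lemma opList_succ' (f : ℕ → E →L[ℂ] E) (s k : ℕ) :
    opList f s (k + 1) = opList f s k * f (s + k) := by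
  rw [opList_add, opList_succ, opList_zero, mul_one]

lemma opList_congr {f g : ℕ → E →L[ℂ] E} {s t k : ℕ} (h : ∀ i < k, f (s + i) = g (t + i)) :
    opList f s k = opList g t k := by
  induction k with
  | zero => rfl
  | succ k ih =>
    rw [opList_succ', opList_succ', ih fun i hi => h i (by omega), h k (by omega)]

lemma mul_opList_of_anticomm {Z : E →L[ℂ] E} {f : ℕ → E →L[ℂ] E}
    (h : ∀ j, Z * f j = -(f j * Z)) (s k : ℕ) :
    Z * opList f s k = (-1 : ℂ) ^ k • (opList f s k * Z) := by
  induction k with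
  | zero => simp [opList_zero]
  | succ k ih =>
    rw [opList_succ', ← mul_assoc, ih, smul_mul_assoc, mul_assoc, h, pow_succ, mul_smul, mul_neg,
      mul_assoc, neg_one_smul]

lemma self_mul_dOp (hF : F * F = 1) (X : E →L[ℂ] E) : F * dOp F X = -(dOp F X * F) := by
  simp only [dOp, mul_smul_comm, smul_mul_assoc, ← smul_neg, mul_sub, sub_mul, ← mul_assoc, hF,
    one_mul]
  simp only [mul_assoc, hF, mul_one, neg_sub]

lemma mul_dOp_of_even (hFε : F * ε = -(ε * F)) {X : E →L[ℂ] E} (hX : ε * X = X * ε) :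
    ε * dOp F X = -(dOp F X * ε) := by
  have hFX : F * X * ε = -(ε * (F * X)) := by
    rw [mul_assoc, ← hX, ← mul_assoc, hFε, neg_mul, mul_assoc]
  have hXF : X * F * ε = -(ε * (X * F)) := by
    rw [mul_assoc, hFε, mul_neg, ← mul_assoc, ← hX, mul_assoc]
  rw [dOp, mul_smul_comm, smul_mul_assoc, sub_mul, hFX, hXF, mul_sub, ← smul_neg, neg_sub_neg,
    neg_sub]

lemma mul_self_eq_add_smul_dOp (F X : E →L[ℂ] E) : X * F = F * X + Complex.I • dOp F X := by
  simp [dOp, smul_smul]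

lemma dOp_mul (F X Y : E →L[ℂ] E) : dOp F (X * Y) = dOp F X * Y + X * dOp F Y := by
  simp only [dOp, smul_mul_assoc, mul_smul_comm, ← smul_add]
  noncomm_ring

lemma dOp_mul_mul {Y Z : E →L[ℂ] E} {c : ℂ} (hY : F * Y = c • (Y * F)) (hZ : Z * F = c • (F * Z))
    (X : E →L[ℂ] E) : dOp F (Y * X * Z) = c • (Y * dOp F X * Z) := by
  have hl : F * (Y * X * Z) = c • (Y * (F * X) * Z) := by
    rw [← mul_assoc, ← mul_assoc, hY]
    simp only [smul_mul_assoc, mul_assoc]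
  have hr : Y * X * Z * F = c • (Y * (X * F) * Z) := by
    rw [mul_assoc, hZ]
    simp only [mul_smul_comm, mul_assoc]
  rw [dOp, hl, hr, dOp, ← smul_sub, mul_smul_comm, smul_mul_assoc, mul_sub, sub_mul, smul_comm]

/-- The ordered product `dx_s ⋯ dx_{s+k-1}` of differentials of a sequence of operators. -/
def dProd (F : E →L[ℂ] E) (x : ℕ → E →L[ℂ] E) (s k : ℕ) : E →L[ℂ] E :=
  opList (fun j => dOp F (x j)) s k

variable [CompleteSpace E]

/-- The functional `X ↦ Trace(εFX)`. -/
def twistedTrace (ε F X : E →L[ℂ] E) : ℂ := opTrace (ε * F * X)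

lemma twistedTrace_smul (c : ℂ) (X : E →L[ℂ] E) :
    twistedTrace ε F (c • X) = c * twistedTrace ε F X := by
  rw [twistedTrace, mul_smul_comm, opTrace_smul, twistedTrace]

lemma twistedTrace_add {X Y : E →L[ℂ] E} (hX : IsSchatten 1 X) (hY : IsSchatten 1 Y) :
    twistedTrace ε F (X + Y) = twistedTrace ε F X + twistedTrace ε F Y := by
  rw [twistedTrace, mul_add]
  exact opTrace_add (hX.mul_left _).summable_sval (hY.mul_left _).summable_sval

lemma twistedTrace_mul_comm {d k l : ℕ} [NeZero d] {X Y : E →L[ℂ] E}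
    (hεX : ε * F * X = X * (ε * F)) (hX : IsSchatten (d / k) X) (hY : IsSchatten (d / l) Y)
    (hd : d ≤ k + l) : twistedTrace ε F (X * Y) = twistedTrace ε F (Y * X) := by
  calc opTrace (ε * F * (X * Y)) = opTrace (X * (ε * F * Y)) := by
        rw [← mul_assoc, hεX, mul_assoc]
    _ = opTrace (ε * F * (Y * X)) := by
        rw [opTrace_mul_comm_of_isSchatten hX (hY.mul_left _) hd, mul_assoc]

lemma opTrace_mul_mul_anticomm (hFε : F * ε = -(ε * F)) {θ : E →L[ℂ] E} (hθ : IsSchatten 1 θ) :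
    opTrace (ε * (θ * F)) = -opTrace (ε * (F * θ)) := by
  rw [← mul_assoc, ← (hθ.mul_left ε).opTrace_mul_comm, ← mul_assoc, hFε, ← neg_one_smul ℂ,
    smul_mul_assoc, opTrace_smul, mul_assoc, neg_one_mul]

lemma twistedTrace_dOp (hF : F * F = 1) (hFε : F * ε = -(ε * F)) {θ : E →L[ℂ] E}
    (hθ : IsSchatten 1 θ) : twistedTrace ε F (dOp F θ) = 2 * Complex.I * opTrace (ε * θ) := by
  have hdθ : ε * F * dOp F θ = Complex.I • (ε * θ + (-1 : ℂ) • (ε * (F * θ * F))) := by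
    rw [dOp, mul_smul_comm, mul_sub, mul_assoc ε, ← mul_assoc F F, hF, one_mul, neg_one_smul,
      ← sub_eq_add_neg, mul_assoc ε, mul_assoc F θ]
  have hFθF : opTrace (ε * (F * θ * F)) = -opTrace (ε * θ) := by
    rw [opTrace_mul_mul_anticomm hFε (hθ.mul_left F), ← mul_assoc F, hF, one_mul]
  rw [twistedTrace, hdθ, opTrace_smul, opTrace_add (hθ.mul_left ε).summable_sval
    (((hθ.mul_left F).mul_right F).mul_left ε |>.smul _).summable_sval, opTrace_smul, hFθF]
  ring

lemma opTrace_dOp_mul_eq_zero (hFε : F * ε = -(ε * F)) (X : E →L[ℂ] E) {Y : E →L[ℂ] E}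
    (hFY : F * Y = -(Y * F)) (hY : IsSchatten 1 Y) : opTrace (ε * (dOp F X * Y)) = 0 := by
  have hXY : ε * (dOp F X * Y) =
      Complex.I • (ε * (F * (X * Y)) + ε * (X * Y * F)) := by
    rw [dOp, smul_mul_assoc, mul_smul_comm, ← mul_add, sub_mul, mul_assoc X F, hFY]
    simp only [mul_neg, sub_neg_eq_add, mul_assoc]
  have hXY1 := hY.mul_left X
  rw [hXY, opTrace_smul, opTrace_add ((hXY1.mul_left F).mul_left ε).summable_sval
    ((hXY1.mul_right F).mul_left ε).summable_sval, opTrace_mul_mul_anticomm hFε hXY1]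
  ring

lemma twistedTrace_mul_mul_of_even (hF : F * F = 1) (hFε : F * ε = -(ε * F)) (X : E →L[ℂ] E)
    {Y Z : E →L[ℂ] E} (hZ : ε * Z = Z * ε) (hFY : F * Y = -(Y * F)) (hY : IsSchatten 1 Y) :
    twistedTrace ε F (X * Y * Z) =
      twistedTrace ε F (Z * X * Y) - 2⁻¹ * twistedTrace ε F (dOp F Z * dOp F X * Y) := by
  have hXY := hY.mul_left X
  have hcycle : twistedTrace ε F (X * Y * Z) =
      twistedTrace ε F (Z * X * Y) + Complex.I * opTrace (ε * (dOp F Z * X * Y)) := by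
    have hZεF : Z * (ε * F) = ε * F * Z + Complex.I • (ε * dOp F Z) := by
      rw [← mul_assoc, ← hZ, mul_assoc, mul_self_eq_add_smul_dOp F Z, mul_add, mul_smul_comm,
        mul_assoc]
    rw [twistedTrace, ← mul_assoc, ← (hXY.mul_left _).opTrace_mul_comm, ← mul_assoc, hZεF,
      add_mul, smul_mul_assoc, opTrace_add (hXY.mul_left _).summable_sval
        ((hXY.mul_left _).smul _).summable_sval, opTrace_smul, twistedTrace]
    simp only [mul_assoc]
  have hleibniz : opTrace (ε * (dOp F Z * X * Y)) = -opTrace (ε * (Z * dOp F X * Y)) := by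
    have hzero := opTrace_dOp_mul_eq_zero hFε (Z * X) hFY hY
    rw [dOp_mul, add_mul, mul_add, opTrace_add ((hY.mul_left _).mul_left _).summable_sval
      ((hY.mul_left _).mul_left _).summable_sval] at hzero
    exact eq_neg_of_add_eq_zero_left hzero
  have hd : dOp F (Z * dOp F X * Y) = dOp F Z * dOp F X * Y := by
    have hFdXY : dOp F X * Y * F = (1 : ℂ) • (F * (dOp F X * Y)) := by
      rw [one_smul, ← mul_assoc, self_mul_dOp hF, neg_mul, mul_assoc, mul_assoc, hFY, mul_neg,
        neg_neg]
    simpa [mul_assoc] using dOp_mul_mul (Y := 1) (by simp) hFdXY Z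
  rw [hcycle, hleibniz, ← hd, twistedTrace_dOp hF hFε (hY.mul_left _)]
  ring

lemma Trs_of_even (hε : ε * ε = 1) {θ : E →L[ℂ] E} (hθ : ε * θ = θ * ε) :
    Trs ε F θ = -(Complex.I / 2) * twistedTrace ε F (dOp F θ) := by
  have hεθε : ε * θ * ε = θ := by rw [hθ, mul_assoc, hε, mul_one]
  have heven : evenPart ε θ = θ := by
    rw [evenPart, hεθε, ← two_smul ℂ, smul_smul, inv_mul_cancel₀ two_ne_zero, one_smul]
  have hgComm : gComm ε F θ = (-Complex.I) • dOp F θ := by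
    simp [gComm, heven, oddPart, hεθε, dOp, smul_smul]
  rw [Trs, hgComm, mul_smul_comm, opTrace_smul, twistedTrace]
  ring

lemma Trs_eq_zero_of_odd (hε : ε * ε = 1) (hFε : F * ε = -(ε * F)) {θ : E →L[ℂ] E}
    (hθ1 : IsSchatten 1 θ) (hθ : ε * θ = -(θ * ε)) : Trs ε F θ = 0 := by
  have hεθε : ε * θ * ε = -θ := by rw [hθ, neg_mul, mul_assoc, hε, mul_one]
  have hodd : oddPart ε θ = θ := by
    rw [oddPart, hεθε, sub_neg_eq_add, ← two_smul ℂ, smul_smul, inv_mul_cancel₀ two_ne_zero,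
      one_smul]
  have hgComm : gComm ε F θ = F * θ + θ * F := by
    simp [gComm, evenPart, hεθε, hodd]
  have hFθ := hθ1.mul_left F
  rw [Trs, hgComm, mul_assoc, mul_add, mul_add, ← mul_assoc F θ F,
    opTrace_add ((hFθ.mul_left F).mul_left ε).summable_sval
      ((hFθ.mul_right F).mul_left ε).summable_sval,
    opTrace_mul_mul_anticomm hFε hFθ, add_neg_cancel, mul_zero]

end OperatorIdentities

section CyclicCochains

variable {R : Type*} {k : ℕ}

lemma natIdx_of_lt (a : Fin (k + 1) → R) {i : ℕ} (hi : i < k + 1) : natIdx a i = a ⟨i, hi⟩ :=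
  congrArg a (Fin.ext (Nat.mod_eq_of_lt hi))

lemma ext_natIdx {a b : Fin (k + 1) → R} (h : ∀ i ≤ k, natIdx a i = natIdx b i) : a = b :=
  funext fun i => by
    simpa only [natIdx_of_lt _ i.isLt] using h i (Nat.le_of_lt_succ i.isLt)

lemma natIdx_add_period (a : Fin (k + 1) → R) (i : ℕ) : natIdx a (i + (k + 1)) = natIdx a i :=
  congrArg a (Fin.ext (Nat.add_mod_right i (k + 1)))

lemma natIdx_period (a : Fin (k + 1) → R) : natIdx a (k + 1) = natIdx a 0 := by
  simpa using natIdx_add_period a 0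

/-- The cyclic shift `(a₀, …, a_k) ↦ (a₁, …, a_k, a₀)`. -/
def cyclicShift (a : Fin (k + 1) → R) : Fin (k + 1) → R := fun i => a (i + 1)

lemma natIdx_cyclicShift (a : Fin (k + 1) → R) (i : ℕ) :
    natIdx (cyclicShift a) i = natIdx a (i + 1) :=
  congrArg a (Fin.ext (by simp [Fin.val_add]))

lemma natIdx_cyclicShift_iterate (a : Fin (k + 1) → R) (j i : ℕ) :
    natIdx (cyclicShift^[j] a) i = natIdx a (i + j) := by
  induction j generalizing a with
  | zero => rfl
  | succ j ih => rw [Function.iterate_succ_apply, ih, natIdx_cyclicShift, add_assoc]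

lemma cyclicShift_iterate_period (a : Fin (k + 1) → R) : cyclicShift^[k + 1] a = a := by
  refine ext_natIdx fun i _ => ?_
  rw [natIdx_cyclicShift_iterate, natIdx_add_period]

/-- The signed cyclic permutation `λ` of the `k`-cochains `(Fin (k + 1) → R) → ℂ`. -/
def cyclicOp (R : Type*) (k : ℕ) : Module.End ℂ ((Fin (k + 1) → R) → ℂ) :=
  (-1 : ℂ) ^ k • LinearMap.funLeft ℂ ℂ cyclicShift

lemma cyclicOp_apply (ψ : (Fin (k + 1) → R) → ℂ) (a : Fin (k + 1) → R) :
    cyclicOp R k ψ a = (-1) ^ k * ψ (cyclicShift a) := rfl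

lemma cyclicOp_pow_apply (j : ℕ) (ψ : (Fin (k + 1) → R) → ℂ) (a : Fin (k + 1) → R) :
    (cyclicOp R k ^ j) ψ a = (-1) ^ (k * j) * ψ (cyclicShift^[j] a) := by
  induction j generalizing a with
  | zero => simp
  | succ j ih =>
    rw [pow_succ', Module.End.mul_apply, cyclicOp_apply, ih, Function.iterate_succ_apply]
    ring

lemma cyclicOp_pow_period (R : Type*) (k : ℕ) : cyclicOp R k ^ (k + 1) = 1 := by
  ext ψ a
  rw [cyclicOp_pow_apply, cyclicShift_iterate_period, (Nat.even_mul_succ_self k).neg_one_pow,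
    one_mul, Module.End.one_apply]

/-- The cyclic norm `N = 1 + λ + ⋯ + λ^k` on `k`-cochains. -/
def cyclicNorm (R : Type*) (k : ℕ) : Module.End ℂ ((Fin (k + 1) → R) → ℂ) :=
  ∑ j ∈ Finset.range (k + 1), cyclicOp R k ^ j

lemma cyclicNorm_apply (ψ : (Fin (k + 1) → R) → ℂ) :
    cyclicNorm R k ψ = ∑ j ∈ Finset.range (k + 1), (cyclicOp R k ^ j) ψ :=
  LinearMap.sum_apply _ _ _

lemma cyclicOp_mul_cyclicNorm (R : Type*) (k : ℕ) :
    cyclicOp R k * cyclicNorm R k = cyclicNorm R k := by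
  have h := mul_geom_sum (cyclicOp R k) (k + 1)
  rwa [cyclicOp_pow_period, sub_self, sub_one_mul, sub_eq_zero] at h

lemma cyclicNorm_mul_cyclicOp (R : Type*) (k : ℕ) :
    cyclicNorm R k * cyclicOp R k = cyclicNorm R k := by
  have h := geom_sum_mul (cyclicOp R k) (k + 1)
  rwa [cyclicOp_pow_period, sub_self, mul_sub_one, sub_eq_zero] at h

lemma cyclicOp_pow_cyclicNorm (i : ℕ) (ψ : (Fin (k + 1) → R) → ℂ) :
    (cyclicOp R k ^ i) (cyclicNorm R k ψ) = cyclicNorm R k ψ := by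
  rw [← Module.End.mul_apply]
  congr 1
  induction i with
  | zero => rw [pow_zero, one_mul]
  | succ i ih => rw [pow_succ, mul_assoc, cyclicOp_mul_cyclicNorm, ih]

lemma cyclicNorm_cyclicOp_pow (i : ℕ) (ψ : (Fin (k + 1) → R) → ℂ) :
    cyclicNorm R k ((cyclicOp R k ^ i) ψ) = cyclicNorm R k ψ := by
  rw [← Module.End.mul_apply]
  congr 1
  induction i with
  | zero => rw [pow_zero, mul_one]
  | succ i ih => rw [pow_succ', ← mul_assoc, cyclicNorm_mul_cyclicOp, ih]

lemma cyclicNorm_of_cyclicOp_eq {ψ : (Fin (k + 1) → R) → ℂ} (hψ : cyclicOp R k ψ = ψ) :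
    cyclicNorm R k ψ = (k + 1 : ℕ) • ψ := by
  have hpow (j : ℕ) : (cyclicOp R k ^ j) ψ = ψ := by
    rw [Module.End.pow_apply, Function.iterate_fixed hψ]
  simp [cyclicNorm_apply, hpow]

variable [Mul R]

/-- The tuple `(a₀, …, a_i a_{i+1}, …, a_{k+1})`, and `(a_{k+1} a₀, a₁, …, a_k)` for `i = k + 1`. -/
def face (i : ℕ) (a : Fin (k + 2) → R) : Fin (k + 1) → R := fun j =>
  if (j : ℕ) = i % (k + 1) then natIdx a i * natIdx a (i + 1)
  else if (j : ℕ) < i then natIdx a j else natIdx a (j + 1)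

lemma natIdx_face (i : ℕ) (a : Fin (k + 2) → R) {j : ℕ} (hj : j ≤ k) :
    natIdx (face i a) j = if j = i % (k + 1) then natIdx a i * natIdx a (i + 1)
      else if j < i then natIdx a j else natIdx a (j + 1) :=
  natIdx_of_lt _ (Nat.lt_succ_of_le hj)

lemma face_cyclicShift {i : ℕ} (hi : i ≤ k) (a : Fin (k + 2) → R) :
    face i (cyclicShift a) = cyclicShift (face (i + 1) a) := by
  refine ext_natIdx fun j hj => ?_
  rw [natIdx_cyclicShift, natIdx_face _ _ hj]
  simp only [natIdx_cyclicShift, Nat.mod_eq_of_lt (Nat.lt_succ_of_le hi)]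
  obtain hjk | rfl := hj.lt_or_eq
  · rw [natIdx_face _ _ hjk]
    obtain hik | rfl := hi.lt_or_eq
    · simp [Nat.mod_eq_of_lt (Nat.succ_lt_succ hik)]
    · rw [Nat.mod_self, if_neg hjk.ne, if_pos hjk, if_neg j.succ_ne_zero,
        if_pos (Nat.succ_lt_succ hjk)]
  · rw [natIdx_period (face _ a), natIdx_period a, natIdx_face _ _ j.zero_le]
    obtain hij | rfl := hi.lt_or_eq
    · rw [if_neg hij.ne', if_neg hij.not_gt, Nat.mod_eq_of_lt (Nat.succ_lt_succ hij),
        if_neg i.succ_ne_zero.symm, if_pos i.succ_pos]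
    · rw [if_pos rfl, Nat.mod_self, if_pos rfl]

/-- The coface operator `ψ ↦ ψ ∘ face i` from `k`-cochains to `(k + 1)`-cochains. -/
def coface (i : ℕ) : ((Fin (k + 1) → R) → ℂ) →ₗ[ℂ] ((Fin (k + 2) → R) → ℂ) :=
  LinearMap.funLeft ℂ ℂ (face i)

lemma coface_apply (i : ℕ) (ψ : (Fin (k + 1) → R) → ℂ) (a : Fin (k + 2) → R) :
    coface i ψ a = ψ (face i a) := rfl

lemma hochB_eq_sum_coface (ψ : (Fin (k + 1) → R) → ℂ) :
    hochB k ψ = ∑ i ∈ Finset.range (k + 2), (-1 : ℂ) ^ i • coface i ψ := by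
  funext a
  have hmid (i : Fin (k + 1)) : (fun j : Fin (k + 1) => if (j : ℕ) < i then a j.castSucc
      else if (j : ℕ) = i then a j.castSucc * a j.succ else a j.succ) = face i a := by
    funext j
    have hcast : natIdx a j = a j.castSucc := natIdx_of_lt a j.castSucc.isLt
    have hsucc : natIdx a (j + 1) = a j.succ := natIdx_of_lt a j.succ.isLt
    rw [face, Nat.mod_eq_of_lt i.isLt, hcast, hsucc]
    obtain hij | hij | hij := lt_trichotomy (j : ℕ) i
    · rw [if_pos hij, if_neg hij.ne, if_pos hij]
    · rw [if_neg hij.not_lt, if_pos hij, if_pos hij, ← hij, hcast, hsucc]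
    · rw [if_neg hij.not_gt, if_neg hij.ne', if_neg hij.ne', if_neg hij.not_gt]
  have hlast : (fun j : Fin (k + 1) => if (j : ℕ) = 0 then a (Fin.last (k + 1)) * a 0
      else a j.castSucc) = face (k + 1) a := by
    funext j
    have hcast : natIdx a j = a j.castSucc := natIdx_of_lt a j.castSucc.isLt
    have hlast : natIdx a (k + 1) = a (Fin.last (k + 1)) := natIdx_of_lt a (k + 1).lt_succ_self
    rw [face, Nat.mod_self, if_pos j.isLt, natIdx_period, hcast, hlast]
    rfl
  simp only [hochB, hmid, hlast, Finset.sum_range_succ _ (k + 1), Finset.sum_apply,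
    Pi.smul_apply, smul_eq_mul, coface_apply,
    Fin.sum_univ_eq_sum_range (fun i => (-1 : ℂ) ^ i * ψ (face i a))]

lemma hochB_smul (c : ℂ) (ψ : (Fin (k + 1) → R) → ℂ) : hochB k (c • ψ) = c • hochB k ψ := by
  simp only [hochB_eq_sum_coface, map_smul, Finset.smul_sum, smul_comm c]

lemma cyclicOp_coface {i : ℕ} (hi : i ≤ k) (ψ : (Fin (k + 1) → R) → ℂ) :
    cyclicOp R (k + 1) (coface i ψ) = -coface (i + 1) (cyclicOp R k ψ) := by
  funext a
  simp only [cyclicOp_apply, coface_apply, Pi.neg_apply, face_cyclicShift hi, pow_succ]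
  ring

lemma cyclicOp_pow_coface_zero {i : ℕ} (hi : i ≤ k + 1) (ψ : (Fin (k + 1) → R) → ℂ) :
    (cyclicOp R (k + 1) ^ i) (coface 0 ψ) = (-1 : ℂ) ^ i • coface i ((cyclicOp R k ^ i) ψ) := by
  induction i with
  | zero => simp
  | succ i ih =>
    rw [pow_succ', Module.End.mul_apply, ih (by omega), map_smul, cyclicOp_coface (by omega),
      pow_succ' (cyclicOp R k), Module.End.mul_apply, pow_succ', neg_one_mul, neg_smul, smul_neg]

lemma hochB_cyclicNorm (ψ : (Fin (k + 1) → R) → ℂ) :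
    hochB k (cyclicNorm R k ψ) = cyclicNorm R (k + 1) (coface 0 (cyclicNorm R k ψ)) := by
  rw [hochB_eq_sum_coface, cyclicNorm_apply (k := k + 1)]
  refine Finset.sum_congr rfl fun i hi => ?_
  rw [cyclicOp_pow_coface_zero (Nat.lt_succ_iff.mp (Finset.mem_range.mp hi)),
    cyclicOp_pow_cyclicNorm]

lemma cyclicNorm_hochB (ψ : (Fin (k + 1) → R) → ℂ) :
    cyclicNorm R (k + 1) (hochB k ψ) =
      cyclicNorm R (k + 1) (coface 0 (cyclicNorm R k ψ)) + cyclicNorm R (k + 1) (coface 0 ψ) := by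
  have hcoface : ∀ i ∈ Finset.range (k + 2), cyclicNorm R (k + 1) ((-1 : ℂ) ^ i • coface i ψ) =
      cyclicNorm R (k + 1) (coface 0 ((cyclicOp R k ^ (k + 2 - 1 - i)) ψ)) := fun i hi => by
    have hik : i ≤ k + 1 := Nat.lt_succ_iff.mp (Finset.mem_range.mp hi)
    rw [← cyclicNorm_cyclicOp_pow i (coface 0 _), cyclicOp_pow_coface_zero hik,
      ← Module.End.mul_apply, ← pow_add, Nat.add_succ_sub_one, Nat.add_sub_cancel' hik,
      cyclicOp_pow_period, Module.End.one_apply]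
  rw [hochB_eq_sum_coface, map_sum, Finset.sum_congr rfl hcoface,
    Finset.sum_range_reflect
      (fun i => cyclicNorm R (k + 1) (coface 0 ((cyclicOp R k ^ i) ψ))) (k + 2),
    Finset.sum_range_succ, cyclicOp_pow_period, ← map_sum, ← map_sum, ← cyclicNorm_apply,
    Module.End.one_apply]

theorem hochB_cyclicNorm_eq_sub (ψ : (Fin (k + 1) → R) → ℂ) :
    hochB k (cyclicNorm R k ψ) =
      cyclicNorm R (k + 1) (hochB k ψ) - cyclicNorm R (k + 1) (coface 0 ψ) := by
  rw [cyclicNorm_hochB, hochB_cyclicNorm, add_sub_cancel_right]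

end CyclicCochains

section FredholmFamilies

variable {E : Type*} [NormedAddCommGroup E] [InnerProductSpace ℂ E] {ε F : E →L[ℂ] E}
  {ι κ : Type*} {d : ℕ}

/-- A family of even operators over the Fredholm module `(ε, F)` that is `d`-summable: each
differential `dx_i` lies in the Schatten ideal of exponent `d`, so that products of `k`
differentials lie in that of exponent `d / k`. -/
structure IsFredholmFamily (d : ℕ) (ε F : E →L[ℂ] E) (x : ι → E →L[ℂ] E) : Prop where
  grading_sq : ε * ε = 1
  sq : F * F = 1
  anticomm : F * ε = -(ε * F)
  even : ∀ i, ε * x i = x i * ε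
  isSchatten_dOp : ∀ i, IsSchatten d (dOp F (x i))

lemma dProd_zero (F : E →L[ℂ] E) (x : ℕ → E →L[ℂ] E) (s : ℕ) : dProd F x s 0 = 1 := rfl

lemma dProd_add (F : E →L[ℂ] E) (x : ℕ → E →L[ℂ] E) (s k l : ℕ) :
    dProd F x s (k + l) = dProd F x s k * dProd F x (s + k) l := opList_add _ s k l

lemma dProd_succ (F : E →L[ℂ] E) (x : ℕ → E →L[ℂ] E) (s k : ℕ) :
    dProd F x s (k + 1) = dOp F (x s) * dProd F x (s + 1) k := opList_succ _ s k

lemma dProd_congr {x y : ℕ → E →L[ℂ] E} {s t k : ℕ} (h : ∀ i < k, x (s + i) = y (t + i)) :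
    dProd F x s k = dProd F y t k := opList_congr fun i hi => congrArg (dOp F) (h i hi)

/-- The operator `x₀ dx₁ ⋯ dx_q x_{q+1} dx_{q+2} ⋯ dx_{q+l+1}`. -/
def splitProd (F : E →L[ℂ] E) (x : ℕ → E →L[ℂ] E) (q l : ℕ) : E →L[ℂ] E :=
  x 0 * dProd F x 1 q * x (q + 1) * dProd F x (q + 2) l

/-- The operator `x₀ dx₁ ⋯ dx_{j-1} · x_j x_{j+1} · dx_{j+2} ⋯ dx_{k+1}` whose graded trace is the
`j`-th summand of `Sτ`. -/
def sTauOp (F : E →L[ℂ] E) (x : ℕ → E →L[ℂ] E) (k j : ℕ) : E →L[ℂ] E :=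
  opList (fun i => if i = 0 then x i else dOp F (x i)) 0 j * x j * x (j + 1) *
    dProd F x (j + 2) (k - j)

lemma sTauOp_zero (F : E →L[ℂ] E) (x : ℕ → E →L[ℂ] E) (k : ℕ) :
    sTauOp F x k 0 = x 0 * x 1 * dProd F x 2 k := by
  rw [sTauOp, opList_zero, one_mul]; rfl

lemma sTauOp_succ (F : E →L[ℂ] E) (x : ℕ → E →L[ℂ] E) {q l k : ℕ} (h : q + l + 1 = k) :
    sTauOp F x k (q + 1) =
      x 0 * dProd F x 1 q * (x (q + 1) * x (q + 2)) * dProd F x (q + 3) l := by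
  have hhead : opList (fun i => if i = 0 then x i else dOp F (x i)) 1 q = dProd F x 1 q :=
    opList_congr fun i _ => if_neg (by omega)
  rw [sTauOp, opList_succ, if_pos rfl, hhead, show k - (q + 1) = l by omega]
  simp only [mul_assoc]

namespace IsFredholmFamily

lemma comp {x : ι → E →L[ℂ] E} (hx : IsFredholmFamily d ε F x) (f : κ → ι) :
    IsFredholmFamily d ε F (x ∘ f) where
  grading_sq := hx.grading_sq
  sq := hx.sq
  anticomm := hx.anticomm
  even i := hx.even (f i)
  isSchatten_dOp i := hx.isSchatten_dOp (f i)

variable {x : ℕ → E →L[ℂ] E}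

lemma self_mul_dProd (hx : IsFredholmFamily d ε F x) (s k : ℕ) :
    F * dProd F x s k = (-1 : ℂ) ^ k • (dProd F x s k * F) :=
  mul_opList_of_anticomm (fun j => self_mul_dOp hx.sq (x j)) s k

lemma dProd_mul_self (hx : IsFredholmFamily d ε F x) (s k : ℕ) :
    dProd F x s k * F = (-1 : ℂ) ^ k • (F * dProd F x s k) := by
  rw [hx.self_mul_dProd, smul_smul, ← pow_add, (Even.add_self k).neg_one_pow, one_smul]

lemma grading_mul_dProd (hx : IsFredholmFamily d ε F x) (s k : ℕ) :
    ε * dProd F x s k = (-1 : ℂ) ^ k • (dProd F x s k * ε) :=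
  mul_opList_of_anticomm (fun j => mul_dOp_of_even hx.anticomm (hx.even j)) s k

lemma grading_mul_mul (hx : IsFredholmFamily d ε F x) {X Y : E →L[ℂ] E} (hX : ε * X = X * ε)
    (hY : ε * Y = Y * ε) (s k t l : ℕ) :
    ε * (X * dProd F x s k * Y * dProd F x t l) =
      (-1 : ℂ) ^ (k + l) • (X * dProd F x s k * Y * dProd F x t l * ε) := by
  calc ε * (X * dProd F x s k * Y * dProd F x t l)
      = X * (ε * dProd F x s k) * Y * dProd F x t l := by simp only [← mul_assoc, hX]
    _ = (-1 : ℂ) ^ k • (X * dProd F x s k * Y * (ε * dProd F x t l)) := by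
        rw [hx.grading_mul_dProd]
        simp only [mul_smul_comm, smul_mul_assoc, ← mul_assoc, mul_assoc _ ε Y, hY]
    _ = _ := by
        rw [hx.grading_mul_dProd, mul_smul_comm, smul_smul, ← pow_add, mul_assoc _ _ ε]

lemma commute_dProd (hx : IsFredholmFamily d ε F x) (s k : ℕ) :
    ε * F * dProd F x s k = dProd F x s k * (ε * F) := by
  rw [mul_assoc, hx.self_mul_dProd, mul_smul_comm, ← mul_assoc, hx.grading_mul_dProd,
    smul_mul_assoc, smul_smul, ← pow_add, (Even.add_self k).neg_one_pow, one_smul,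
    mul_assoc]

variable [NeZero d]

lemma isSchatten_dProd (hx : IsFredholmFamily d ε F x) (s k : ℕ) :
    IsSchatten (d / k) (dProd F x s k) := by
  induction k with
  | zero => simpa [ENNReal.div_zero (NeZero.ne (d : ℝ≥0∞))] using isSchatten_top _
  | succ k ih =>
    rw [dProd_add]
    refine ih.mul_natCast_div ?_
    simpa [dProd, opList_succ, opList_zero] using hx.isSchatten_dOp (s + k)

lemma isSchatten_one_dProd (hx : IsFredholmFamily d ε F x) (s : ℕ) {k : ℕ} (hk : d ≤ k) :
    IsSchatten 1 (dProd F x s k) :=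
  (hx.isSchatten_dProd s k).mono (natCast_div_natCast_le_one hk)

lemma isSchatten_one_splitProd (hx : IsFredholmFamily d ε F x) {q l : ℕ} (hd : d ≤ q + l) :
    IsSchatten 1 (splitProd F x q l) :=
  (((hx.isSchatten_dProd 1 q).mul_left _).mul_right _ |>.mul_natCast_div
    (hx.isSchatten_dProd (q + 2) l)).mono (natCast_div_natCast_le_one hd)

variable [CompleteSpace E]

lemma twistedTrace_dProd_mul_comm (hx : IsFredholmFamily d ε F x) (s k : ℕ) {l : ℕ}
    {Y : E →L[ℂ] E} (hY : IsSchatten (d / l) Y) (hd : d ≤ k + l) :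
    twistedTrace ε F (dProd F x s k * Y) = twistedTrace ε F (Y * dProd F x s k) :=
  twistedTrace_mul_comm (hx.commute_dProd s k) (hx.isSchatten_dProd s k) hY hd

end IsFredholmFamily

end FredholmFamilies

section CharacterCochain

variable {E : Type*} [NormedAddCommGroup E] [InnerProductSpace ℂ E] {ε F : E →L[ℂ] E}
  {R : Type*} {k : ℕ}

lemma charOp_eq (ρ : R → E →L[ℂ] E) (F : E →L[ℂ] E) (a : Fin (k + 1) → R) :
    charOp ρ F k a = ρ (natIdx a 0) * dProd F (ρ ∘ natIdx a) 1 k := rfl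

lemma dProd_natIdx_add_period (ρ : R → E →L[ℂ] E) (F : E →L[ℂ] E) (a : Fin (k + 1) → R)
    (s l : ℕ) : dProd F (ρ ∘ natIdx a) (s + (k + 1)) l = dProd F (ρ ∘ natIdx a) s l :=
  dProd_congr fun i _ => congrArg ρ (by rw [Nat.add_right_comm, natIdx_add_period])

lemma dProd_natIdx_cyclicShift_iterate (ρ : R → E →L[ℂ] E) (F : E →L[ℂ] E)
    (a : Fin (k + 1) → R) (j s l : ℕ) :
    dProd F (ρ ∘ natIdx (cyclicShift^[j] a)) s l = dProd F (ρ ∘ natIdx a) (s + j) l :=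
  dProd_congr fun i _ => congrArg ρ (by rw [natIdx_cyclicShift_iterate, Nat.add_right_comm])

lemma charOp_cyclicShift_iterate (ρ : R → E →L[ℂ] E) (F : E →L[ℂ] E) (a : Fin (k + 1) → R)
    (j : ℕ) :
    charOp ρ F k (cyclicShift^[j] a) = ρ (natIdx a j) * dProd F (ρ ∘ natIdx a) (j + 1) k := by
  rw [charOp_eq, natIdx_cyclicShift_iterate, dProd_natIdx_cyclicShift_iterate, zero_add, add_comm 1]

section Mul

variable [Mul R]

lemma charOp_face_zero (ρ : R →ₙ* (E →L[ℂ] E)) (F : E →L[ℂ] E) (a : Fin (k + 2) → R) :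
    charOp ρ F k (face 0 a) =
      ρ (natIdx a 0) * ρ (natIdx a 1) * dProd F (ρ ∘ natIdx a) 2 k := by
  rw [charOp_eq, natIdx_face _ _ k.zero_le, Nat.zero_mod, if_pos rfl, map_mul]
  congr 1
  refine dProd_congr fun i hi => congrArg ρ ?_
  rw [natIdx_face _ _ (by omega), Nat.zero_mod, if_neg (by omega), if_neg (by omega)]
  congr 1
  omega

lemma charOp_face_succ (ρ : R →ₙ* (E →L[ℂ] E)) (F : E →L[ℂ] E) {q l : ℕ} (h : q + l + 1 = k)
    (a : Fin (k + 2) → R) :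
    charOp ρ F k (face (q + 1) a) =
      ρ (natIdx a 0) * dProd F (ρ ∘ natIdx a) 1 q *
        dOp F (ρ (natIdx a (q + 1)) * ρ (natIdx a (q + 2))) *
          dProd F (ρ ∘ natIdx a) (q + 3) l := by
  have hmod : (q + 1) % (k + 1) = q + 1 := Nat.mod_eq_of_lt (by omega)
  have hzero : natIdx (face (q + 1) a) 0 = natIdx a 0 := by
    rw [natIdx_face _ _ k.zero_le, hmod, if_neg (by omega), if_pos (by omega)]
  have hmid : natIdx (face (q + 1) a) (1 + q) = natIdx a (q + 1) * natIdx a (q + 2) := by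
    rw [natIdx_face _ _ (by omega), hmod, if_pos (by omega)]
  have hleft : dProd F (ρ ∘ natIdx (face (q + 1) a)) 1 q = dProd F (ρ ∘ natIdx a) 1 q := by
    refine dProd_congr fun i hi => congrArg ρ ?_
    rw [natIdx_face _ _ (by omega), hmod, if_neg (by omega), if_pos (by omega)]
  have hright : dProd F (ρ ∘ natIdx (face (q + 1) a)) (1 + q + 1) l =
      dProd F (ρ ∘ natIdx a) (q + 3) l := by
    refine dProd_congr fun i hi => congrArg ρ ?_
    rw [natIdx_face _ _ (by omega), hmod, if_neg (by omega), if_neg (by omega)]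
    congr 1
    omega
  have hsplit (y : ℕ → E →L[ℂ] E) :
      dProd F y 1 k = dProd F y 1 q * (dOp F (y (1 + q)) * dProd F y (1 + q + 1) l) := by
    rw [← dProd_succ, ← dProd_add, ← add_assoc, h]
  rw [charOp_eq, hzero, hsplit, hleft, hright,
    Function.comp_apply, hmid, map_mul]
  simp only [mul_assoc]

lemma charOp_face_last (ρ : R →ₙ* (E →L[ℂ] E)) (F : E →L[ℂ] E) (a : Fin (k + 2) → R) :
    charOp ρ F k (face (k + 1) a) =
      ρ (natIdx a (k + 1)) * ρ (natIdx a 0) * dProd F (ρ ∘ natIdx a) 1 k := by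
  rw [charOp_eq, natIdx_face _ _ k.zero_le, Nat.mod_self, if_pos rfl, map_mul, natIdx_period]
  congr 1
  refine dProd_congr fun i hi => congrArg ρ ?_
  rw [natIdx_face _ _ (by omega), Nat.mod_self, if_neg (by omega), if_pos (by omega)]

end Mul

end CharacterCochain

section Periodicity

variable {E : Type*} [NormedAddCommGroup E] [InnerProductSpace ℂ E] [CompleteSpace E]
  {ε F : E →L[ℂ] E} {R : Type*} {k : ℕ}

/-- The cochain `(a₀, …, a_k) ↦ Trace(εF ρ(a₀)dρ(a₁)⋯dρ(a_k))`. -/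
def charCochain (ε F : E →L[ℂ] E) (ρ : R → E →L[ℂ] E) (k : ℕ) (a : Fin (k + 1) → R) : ℂ :=
  twistedTrace ε F (charOp ρ F k a)

/-- The cochain `(a₀, …, a_k) ↦ Trace(εF dρ(a₀)dρ(a₁)⋯dρ(a_k))`. -/
def diffCochain (ε F : E →L[ℂ] E) (ρ : R → E →L[ℂ] E) (k : ℕ) (a : Fin (k + 1) → R) : ℂ :=
  twistedTrace ε F (dProd F (ρ ∘ natIdx a) 0 (k + 1))

lemma phiFn_eq_cyclicNorm (ρ : R → E →L[ℂ] E) (ε F : E →L[ℂ] E) {n : ℕ} (hn : Even n) :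
    phiFn ρ ε F n = cyclicNorm R (n + 1) (charCochain ε F ρ (n + 1)) := by
  funext a
  rw [phiFn, cyclicNorm_apply, Finset.sum_apply]
  refine Finset.sum_congr rfl fun j _ => ?_
  rw [cyclicOp_pow_apply, pow_mul, hn.add_one.neg_one_pow, charCochain, charOp_cyclicShift_iterate,
    twistedTrace, ← mul_assoc]
  rfl

lemma cyclicOp_phiFn (ρ : R → E →L[ℂ] E) (ε F : E →L[ℂ] E) {n : ℕ} (hn : Even n) :
    cyclicOp R (n + 1) (phiFn ρ ε F n) = phiFn ρ ε F n := by
  rw [phiFn_eq_cyclicNorm ρ ε F hn, ← Module.End.mul_apply, cyclicOp_mul_cyclicNorm]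

lemma Trs_charOp {d : ℕ} {ρ : R → E →L[ℂ] E} (hρ : IsFredholmFamily d ε F ρ) (hk : Even k)
    (a : Fin (k + 1) → R) :
    Trs ε F (charOp ρ F k a) = -(Complex.I / 2) * diffCochain ε F ρ k a := by
  have hx := hρ.comp (natIdx a)
  have heven : ε * charOp ρ F k a = charOp ρ F k a * ε := by
    rw [charOp_eq, ← mul_assoc, hρ.even, mul_assoc, hx.grading_mul_dProd, hk.neg_one_pow, one_smul,
      mul_assoc]
  have hd : dOp F (charOp ρ F k a) = dProd F (ρ ∘ natIdx a) 0 (k + 1) := by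
    have hF := hx.dProd_mul_self 1 k
    rw [hk.neg_one_pow] at hF
    rw [charOp_eq, dProd_succ]
    simpa using dOp_mul_mul (Y := 1) (by simp) hF (ρ (natIdx a 0))
  rw [Trs_of_even hρ.grading_sq heven, hd, diffCochain]

lemma diffCochain_eq_twistedTrace_dProd {d : ℕ} [NeZero d] {ρ : R → E →L[ℂ] E}
    (hρ : IsFredholmFamily d ε F ρ) (hd : d ≤ k + 1) (a : Fin (k + 1) → R) {p : ℕ}
    (hp : p ≤ k + 1) :
    diffCochain ε F ρ k a = twistedTrace ε F (dProd F (ρ ∘ natIdx a) p (k + 1)) := by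
  obtain ⟨l, hl⟩ := Nat.exists_eq_add_of_le hp
  have hx := hρ.comp (natIdx a)
  calc diffCochain ε F ρ k a
      = twistedTrace ε F (dProd F (ρ ∘ natIdx a) 0 p * dProd F (ρ ∘ natIdx a) p l) := by
        rw [diffCochain, hl, dProd_add, zero_add]
    _ = twistedTrace ε F (dProd F (ρ ∘ natIdx a) p l * dProd F (ρ ∘ natIdx a) (p + l) p) := by
        rw [hx.twistedTrace_dProd_mul_comm 0 p (hx.isSchatten_dProd p l) (hd.trans hl.le), ← hl,
          ← zero_add (k + 1), dProd_natIdx_add_period]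
    _ = twistedTrace ε F (dProd F (ρ ∘ natIdx a) p (k + 1)) := by
        rw [← dProd_add, hl, add_comm l]

variable [NeZero k]

lemma cyclicOp_diffCochain {ρ : R → E →L[ℂ] E} (hρ : IsFredholmFamily k ε F ρ) (hk : Odd k) :
    cyclicOp R (k + 1) (diffCochain ε F ρ (k + 1)) = diffCochain ε F ρ (k + 1) := by
  funext a
  rw [cyclicOp_apply, hk.add_one.neg_one_pow, one_mul,
    diffCochain_eq_twistedTrace_dProd hρ (by omega) a (p := 1) (by omega), diffCochain]
  exact congrArg _ (dProd_natIdx_cyclicShift_iterate ρ F a 1 0 (k + 2))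

variable [Mul R] {ρ : R →ₙ* (E →L[ℂ] E)}

lemma charCochain_face_succ (hρ : IsFredholmFamily k ε F ρ) {q l : ℕ} (h : q + l + 1 = k)
    (a : Fin (k + 2) → R) :
    charCochain ε F ρ k (face (q + 1) a) =
      twistedTrace ε F (splitProd F (ρ ∘ natIdx a) (q + 1) l) +
        twistedTrace ε F (splitProd F (ρ ∘ natIdx a) q (l + 1)) := by
  have hx := hρ.comp (natIdx a)
  rw [charCochain, charOp_face_succ ρ F h, dOp_mul,
    ← twistedTrace_add (hx.isSchatten_one_splitProd (by omega))
      (hx.isSchatten_one_splitProd (by omega))]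
  congr 1
  simp only [splitProd, dProd_add _ _ 1 q 1, dProd_succ _ _ (q + 2) l, mul_add, add_mul,
    mul_assoc, add_comm 1 q]
  rfl

lemma hochB_charCochain_eq_sub (hρ : IsFredholmFamily k ε F ρ) (a : Fin (k + 2) → R) :
    hochB k (charCochain ε F ρ k) a = (-1) ^ k *
      (twistedTrace ε F (splitProd F (ρ ∘ natIdx a) k 0) -
        twistedTrace ε F (ρ (natIdx a (k + 1)) * ρ (natIdx a 0) *
          dProd F (ρ ∘ natIdx a) 1 k)) := by
  have hzero : charCochain ε F ρ k (face 0 a) =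
      twistedTrace ε F (splitProd F (ρ ∘ natIdx a) 0 k) := by
    rw [charCochain, charOp_face_zero, splitProd, dProd_zero, mul_one]
    rfl
  have hsucc : ∀ q ∈ Finset.range k,
      (-1 : ℂ) ^ (q + 1) * charCochain ε F ρ k (face (q + 1) a) =
        (-1) ^ (q + 1) * twistedTrace ε F (splitProd F (ρ ∘ natIdx a) (q + 1) (k - (q + 1))) -
          (-1) ^ q * twistedTrace ε F (splitProd F (ρ ∘ natIdx a) q (k - q)) := fun q hq => by
    obtain ⟨l, rfl⟩ := Nat.exists_eq_add_of_lt (Finset.mem_range.mp hq)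
    rw [charCochain_face_succ hρ rfl, show q + l + 1 - (q + 1) = l by omega,
      show q + l + 1 - q = l + 1 by omega]
    ring
  rw [hochB_eq_sum_coface, Finset.sum_apply]
  simp only [Pi.smul_apply, smul_eq_mul, coface_apply]
  rw [Finset.sum_range_succ, Finset.sum_range_succ', Finset.sum_congr rfl hsucc,
    Finset.sum_range_sub (fun q => (-1 : ℂ) ^ q *
      twistedTrace ε F (splitProd F (ρ ∘ natIdx a) q (k - q))), hzero, charCochain,
    charOp_face_last, Nat.sub_self, Nat.sub_zero]
  ring

lemma hochB_charCochain (hρ : IsFredholmFamily k ε F ρ) (hk : Odd k) :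
    hochB k (charCochain ε F ρ k) = (2 : ℂ)⁻¹ • diffCochain ε F ρ (k + 1) := by
  funext a
  have hx := hρ.comp (natIdx a)
  have hY : F * dProd F (ρ ∘ natIdx a) 1 k = -(dProd F (ρ ∘ natIdx a) 1 k * F) := by
    rw [hx.self_mul_dProd, hk.neg_one_pow, neg_one_smul]
  have hsplit : splitProd F (ρ ∘ natIdx a) k 0 =
      ρ (natIdx a 0) * dProd F (ρ ∘ natIdx a) 1 k * ρ (natIdx a (k + 1)) := mul_one _
  have hcyc : twistedTrace ε F (dOp F (ρ (natIdx a (k + 1))) * dOp F (ρ (natIdx a 0)) *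
      dProd F (ρ ∘ natIdx a) 1 k) = diffCochain ε F ρ (k + 1) a := by
    have hrot : dProd F (ρ ∘ natIdx a) (k + 1 + 1) (k + 1) = dProd F (ρ ∘ natIdx a) 0 (k + 1) := by
      simpa using dProd_natIdx_add_period ρ F a 0 (k + 1)
    rw [diffCochain_eq_twistedTrace_dProd hρ (by omega) a (p := k + 1) (by omega), dProd_succ, hrot,
      dProd_succ, ← mul_assoc]
    rfl
  rw [hochB_charCochain_eq_sub hρ, hsplit, twistedTrace_mul_mul_of_even hρ.sq hρ.anticomm _
    (hρ.even _) hY (hx.isSchatten_one_dProd 1 le_rfl), hcyc, hk.neg_one_pow, Pi.smul_apply,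
    smul_eq_mul]
  ring

lemma Trs_sTauOp_zero (hρ : IsFredholmFamily k ε F ρ) (hk : Odd k) (a : Fin (k + 2) → R) :
    Trs ε F (sTauOp F (ρ ∘ natIdx a) k 0) = 0 := by
  have hx := hρ.comp (natIdx a)
  rw [sTauOp_zero, Function.comp_apply, Function.comp_apply]
  refine Trs_eq_zero_of_odd hρ.grading_sq hρ.anticomm
    ((hx.isSchatten_one_dProd 2 le_rfl).mul_left _) ?_
  rw [← map_mul, ← mul_assoc, hρ.even, mul_assoc, hx.grading_mul_dProd, hk.neg_one_pow,
    neg_one_smul, mul_neg, mul_assoc]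

lemma charCochain_face_zero_cyclicShift_iterate (hρ : IsFredholmFamily k ε F ρ) {q l : ℕ}
    (h : q + l + 1 = k) (a : Fin (k + 2) → R) :
    charCochain ε F ρ k (face 0 (cyclicShift^[q + 1] a)) =
      twistedTrace ε F (dProd F (ρ ∘ natIdx a) 0 (q + 1) *
        (ρ (natIdx a (q + 1) * natIdx a (q + 2)) * dProd F (ρ ∘ natIdx a) (q + 3) l)) := by
  have hx := hρ.comp (natIdx a)
  have hrot : dProd F (ρ ∘ natIdx a) (q + 3 + l) (q + 1) = dProd F (ρ ∘ natIdx a) 0 (q + 1) := by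
    rw [show q + 3 + l = 0 + (k + 1 + 1) by omega, dProd_natIdx_add_period]
  rw [hx.twistedTrace_dProd_mul_comm _ _ ((hx.isSchatten_dProd _ l).mul_left _) (by omega),
    charCochain, charOp_face_zero, natIdx_cyclicShift_iterate, natIdx_cyclicShift_iterate,
    dProd_natIdx_cyclicShift_iterate, ← hrot, ← map_mul, mul_assoc, ← dProd_add, zero_add,
    show 1 + (q + 1) = q + 2 by omega, show 2 + (q + 1) = q + 3 by omega,
    show l + (q + 1) = k by omega]

lemma Trs_sTauOp_succ (hρ : IsFredholmFamily k ε F ρ) {q l : ℕ} (h : q + l + 1 = k)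
    (hk : Odd k) (a : Fin (k + 2) → R) :
    Trs ε F (sTauOp F (ρ ∘ natIdx a) k (q + 1)) =
      -(Complex.I / 2) * (charCochain ε F ρ k (face 0 (cyclicShift^[q + 1] a)) -
        (-1) ^ (q + 1) * charCochain ε F ρ k (face (q + 1) a)) := by
  rw [sTauOp_succ F _ h, charCochain_face_zero_cyclicShift_iterate hρ h, charCochain,
    charOp_face_succ ρ F h, Function.comp_apply (x := q + 1), Function.comp_apply (x := q + 2),
    ← map_mul]
  set x := ρ ∘ natIdx a
  set z := ρ (natIdx a (q + 1) * natIdx a (q + 2))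
  have hx : IsFredholmFamily k ε F x := hρ.comp (natIdx a)
  have hql : Even (q + l) := by subst h; simpa [Nat.odd_add_one] using hk
  have heven : ε * (x 0 * dProd F x 1 q * z * dProd F x (q + 3) l) =
      x 0 * dProd F x 1 q * z * dProd F x (q + 3) l * ε := by
    rw [hx.grading_mul_mul (hx.even 0) (hρ.even _), hql.neg_one_pow, one_smul]
  have hinner : dOp F (dProd F x 1 q * z * dProd F x (q + 3) l) =
      (-1 : ℂ) ^ q • (dProd F x 1 q * dOp F z * dProd F x (q + 3) l) := by
    refine dOp_mul_mul (hx.self_mul_dProd 1 q) ?_ z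
    rw [hx.dProd_mul_self, neg_one_pow_congr (Nat.even_add.mp hql)]
  have houter : dOp F (x 0 * dProd F x 1 q * z * dProd F x (q + 3) l) =
      dProd F x 0 (q + 1) * (z * dProd F x (q + 3) l) +
        (-1 : ℂ) ^ q • (x 0 * dProd F x 1 q * dOp F z * dProd F x (q + 3) l) := by
    rw [dProd_succ, show x 0 * dProd F x 1 q * z * dProd F x (q + 3) l =
      x 0 * (dProd F x 1 q * z * dProd F x (q + 3) l) by simp only [mul_assoc], dOp_mul, hinner]
    simp only [mul_assoc, mul_smul_comm]
  have hleft : IsSchatten 1 (dProd F x 0 (q + 1) * (z * dProd F x (q + 3) l)) :=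
    ((hx.isSchatten_dProd 0 (q + 1)).mul_natCast_div
      ((hx.isSchatten_dProd (q + 3) l).mul_left z)).mono (natCast_div_natCast_le_one (by omega))
  have hright : IsSchatten 1 (x 0 * dProd F x 1 q * dOp F z * dProd F x (q + 3) l) := by
    have hz : IsSchatten (k / (1 : ℕ)) (dOp F z) := by simpa using hρ.isSchatten_dOp _
    exact ((((hx.isSchatten_dProd 1 q).mul_left (x 0)).mul_natCast_div hz).mul_natCast_div
      (hx.isSchatten_dProd (q + 3) l)).mono (natCast_div_natCast_le_one (by omega))
  rw [Trs_of_even hρ.grading_sq heven, houter,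
    twistedTrace_add hleft (hright.smul _), twistedTrace_smul, pow_succ,
    show ρ (natIdx a 0) = x 0 from rfl]
  ring

lemma Trs_sTauOp (hρ : IsFredholmFamily k ε F ρ) (hk : Odd k) {j : ℕ} (hj : j ≤ k)
    (a : Fin (k + 2) → R) :
    Trs ε F (sTauOp F (ρ ∘ natIdx a) k j) =
      -(Complex.I / 2) * (((cyclicOp R (k + 1) ^ j) (coface 0 (charCochain ε F ρ k)) -
        (-1 : ℂ) ^ j • coface j (charCochain ε F ρ k)) a) := by
  rw [Pi.sub_apply, cyclicOp_pow_apply, (hk.add_one.mul_right j).neg_one_pow, one_mul,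
    Pi.smul_apply, smul_eq_mul, coface_apply, coface_apply]
  cases j with
  | zero =>
    rw [sTauOp_zero, pow_zero, one_mul, Function.iterate_zero_apply, sub_self, mul_zero]
    exact Trs_sTauOp_zero hρ hk a
  | succ q =>
    obtain ⟨l, hl⟩ := Nat.exists_eq_add_of_lt hj
    exact Trs_sTauOp_succ hρ hl.symm hk a

lemma sum_Trs_sTauOp (hρ : IsFredholmFamily k ε F ρ) (hk : Odd k) (a : Fin (k + 2) → R) :
    ∑ j ∈ Finset.range (k + 1), Trs ε F (sTauOp F (ρ ∘ natIdx a) k j) =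
      -(Complex.I / 2) * (cyclicNorm R (k + 1) (coface 0 (charCochain ε F ρ k)) -
        hochB k (charCochain ε F ρ k)) a := by
  set ψ := charCochain ε F ρ k
  have hlast : (cyclicOp R (k + 1) ^ (k + 1)) (coface 0 ψ) -
      (-1 : ℂ) ^ (k + 1) • coface (k + 1) ψ = 0 := by
    rw [cyclicOp_pow_coface_zero le_rfl, cyclicOp_pow_period]
    exact sub_self _
  have hsum : cyclicNorm R (k + 1) (coface 0 ψ) - hochB k ψ =
      ∑ j ∈ Finset.range (k + 1),
        ((cyclicOp R (k + 1) ^ j) (coface 0 ψ) - (-1 : ℂ) ^ j • coface j ψ) := by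
    rw [cyclicNorm_apply, hochB_eq_sum_coface, ← Finset.sum_sub_distrib, Finset.sum_range_succ,
      hlast, add_zero]
  rw [hsum, Finset.sum_apply, Finset.mul_sum]
  exact Finset.sum_congr rfl fun j hj =>
    Trs_sTauOp hρ hk (Nat.lt_succ_iff.mp (Finset.mem_range.mp hj)) a

lemma STau_eq {n : ℕ} (hρ : IsFredholmFamily (n + 1) ε F ρ) (hn : Even n) (m : ℕ)
    (a : Fin (n + 3) → R) :
    STau ρ ε F m n a = (2 * Complex.I * (Real.pi : ℂ)) ^ (m + 1) * (m.factorial : ℂ) *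
      (-(Complex.I / 2) *
        (cyclicNorm R (n + 2) (coface 0 (charCochain ε F ρ (n + 1))) -
          hochB (n + 1) (charCochain ε F ρ (n + 1))) a) := by
  rw [← sum_Trs_sTauOp hρ hn.add_one]
  rfl

lemma tauChar_eq {n : ℕ} (hρ : IsFredholmFamily (n + 1) ε F ρ) (hn : Even n) (m : ℕ)
    (a : Fin (n + 3) → R) :
    tauChar ρ ε F (m + 1) (n + 2) a =
      (2 * Complex.I * (Real.pi : ℂ)) ^ (m + 1) * ((m + 1).factorial : ℂ) *
        (-Complex.I * hochB (n + 1) (charCochain ε F ρ (n + 1)) a) := by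
  rw [tauChar, Trs_charOp hρ (hn.add even_two), hochB_charCochain hρ hn.add_one, Pi.smul_apply,
    smul_eq_mul, div_eq_mul_inv, neg_mul, neg_mul, mul_assoc Complex.I]
  rfl

lemma hochB_phiFn {n : ℕ} (hρ : IsFredholmFamily (n + 1) ε F ρ) (hn : Even n) :
    hochB (n + 1) (phiFn ρ ε F n) =
      ((n : ℂ) + 3) • hochB (n + 1) (charCochain ε F ρ (n + 1)) -
        cyclicNorm R (n + 2) (coface 0 (charCochain ε F ρ (n + 1))) := by
  have hcyc : cyclicOp R (n + 2) (hochB (n + 1) (charCochain ε F ρ (n + 1))) =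
      hochB (n + 1) (charCochain ε F ρ (n + 1)) := by
    rw [hochB_charCochain hρ hn.add_one, map_smul, cyclicOp_diffCochain hρ hn.add_one]
  rw [phiFn_eq_cyclicNorm ρ ε F hn, hochB_cyclicNorm_eq_sub, cyclicNorm_of_cyclicOp_eq hcyc,
    ← Nat.cast_smul_eq_nsmul ℂ, show ((n + 2 + 1 : ℕ) : ℂ) = n + 3 by push_cast; ring]

end Periodicity

lemma MemSchatten.isFredholmFamily {E : Type*} [NormedAddCommGroup E] [InnerProductSpace ℂ E]
    {ε F : E →L[ℂ] E} {ι : Type*} {x : ι → E →L[ℂ] E} {n : ℕ} (hε2 : ε * ε = 1)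
    (hF2 : F * F = 1) (hFε : F * ε = -(ε * F)) (heven : ∀ i, ε * x i = x i * ε)
    (hS : ∀ i, MemSchatten ((n : ℝ) + 1) (F * x i - x i * F)) :
    IsFredholmFamily (n + 1) ε F x where
  grading_sq := hε2
  sq := hF2
  anticomm := hFε
  even := heven
  isSchatten_dOp i := by
    have h := ((hS i).isSchatten (by positivity)).smul Complex.I
    rwa [← Nat.cast_add_one, ENNReal.ofReal_natCast] at h

theorem periodicity_of_chern_general {E : Type*} [NormedAddCommGroup E] [InnerProductSpace ℂ E]
    [CompleteSpace E] {R : Type*} [Mul R] (m n : ℕ) (hn : n = 2 * m) (ε F : E →L[ℂ] E)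
    (hε2 : ε * ε = 1) (hF2 : F * F = 1) (hFε : F * ε = -(ε * F))
    (ρ : R →ₙ* (E →L[ℂ] E)) (heven : ∀ a : R, ε * ρ a = ρ a * ε)
    (hS : ∀ a : R, MemSchatten ((n : ℝ) + 1) (F * ρ a - ρ a * F)) :
    (∀ a : Fin (n + 2) → R,
      phiFn (⇑ρ) ε F n (fun i => a (i + 1)) = (-1 : ℂ) ^ (n + 1) * phiFn (⇑ρ) ε F n a) ∧
    (∀ a : Fin (n + 3) → R,
      STau (⇑ρ) ε F m n a - tauChar (⇑ρ) ε F (m + 1) (n + 2) a =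
        hochB (n + 1)
          (fun x => (2 : ℂ) ^ m * Complex.I ^ (m + 2) * (Real.pi : ℂ) ^ (m + 1) *
            (Nat.factorial m : ℂ) * phiFn (⇑ρ) ε F n x) a) := by
  have hρ := MemSchatten.isFredholmFamily hε2 hF2 hFε heven hS
  have hn2 : Even n := hn ▸ even_two_mul m
  refine ⟨fun a => ?_, fun a => ?_⟩
  · have hcyc := congrFun (cyclicOp_phiFn ρ ε F hn2) a
    rw [cyclicOp_apply] at hcyc
    rw [← hcyc, ← mul_assoc, ← pow_add, (Even.add_self _).neg_one_pow, one_mul]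
    rfl
  · have hb := congrFun (hochB_smul ((2 : ℂ) ^ m * Complex.I ^ (m + 2) * (Real.pi : ℂ) ^ (m + 1) *
      (m.factorial : ℂ)) (phiFn ρ ε F n)) a
    refine Eq.trans ?_ hb.symm
    rw [Pi.smul_apply, hochB_phiFn hρ hn2, STau_eq hρ hn2, tauChar_eq hρ hn2,
      Nat.factorial_succ]
    have hnm : (n : ℂ) = 2 * m := by exact_mod_cast hn
    simp only [Pi.sub_apply, Pi.smul_apply, smul_eq_mul, Nat.cast_mul, Nat.cast_add, Nat.cast_one,
      hnm]
    ring

/-- Connes periodicity: with `n = 2m` positive even, `(H, ε)` ℤ₂-graded, `F² = 1`,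
`Fε = -εF`, `ρ : A → B(H)` a homomorphism into even operators with `Fρ(a) - ρ(a)F`
`(n+1)`-Schatten, the cochain `φ` is cyclic (`φ ∈ C^{n+1}_λ(A)`) and
`Sτⁿ - τ^{n+2} = b(2^m i^{m+2} π^{m+1} m!· φ)`; in particular `Sτⁿ` and `τ^{n+2}`
define the same class in `H^{n+2}_λ(A)`. -/
theorem periodicity_of_chern (m n : ℕ) (hm : 0 < m) (hn : n = 2 * m)
    (ε F : H →L[ℂ] H) (hε : IsSelfAdjoint ε) (hε2 : ε * ε = 1) (hF2 : F * F = 1)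
    (hFε : F * ε = -(ε * F))
    (ρ : A →ₙₐ[ℂ] (H →L[ℂ] H)) (heven : ∀ a : A, ε * ρ a = ρ a * ε)
    (hS : ∀ a : A, MemSchatten ((n : ℝ) + 1) (F * ρ a - ρ a * F)) :
    (∀ a : Fin (n + 2) → A,
      phiFn (⇑ρ) ε F n (fun i => a (i + 1)) = (-1 : ℂ) ^ (n + 1) * phiFn (⇑ρ) ε F n a) ∧
    (∀ a : Fin (n + 3) → A,
      STau (⇑ρ) ε F m n a - tauChar (⇑ρ) ε F (m + 1) (n + 2) a =
        hochB (n + 1)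
          (fun x => (2 : ℂ) ^ m * Complex.I ^ (m + 2) * (Real.pi : ℂ) ^ (m + 1) *
            (Nat.factorial m : ℂ) * phiFn (⇑ρ) ε F n x) a) :=
  periodicity_of_chern_general m n hn ε F hε2 hF2 hFε (ρ : A →ₙ* (H →L[ℂ] H)) heven hS
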